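/- The Mac Lane cohomology of F_2 with coefficients in the identity functor satisfies HML^k(F_2; I) ≅ F_2 for all even k ≥ 0 and HML^k(F_2; I) = 0 for all odd k. -/

import Mathlib

open CategoryTheory Limits

noncomputable section

/-- The category `F(𝔽₂)` of functors from finite-dimensional `𝔽₂`-vector spaces to
`𝔽₂`-vector spaces. -/
abbrev FunCatF2 : Type _ := FGModuleCat (ZMod 2) ⥤ ModuleCat (ZMod 2)

/-- The inclusion (identity) functor `I ∈ F(𝔽₂)`, `V ↦ V`. -/
def inclFunctor : FunCatF2 := forget₂ (FGModuleCat (ZMod 2)) (ModuleCat (ZMod 2))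

/-!
Write `I` for the inclusion functor and `S^n` for the `n`-th symmetric power.

In characteristic `2` the derivation `∑ yᵢ ∂/∂xᵢ` of `Sym(V) ⊗ Sym(V)` squares to zero. It gives a
complex `S^n ⟶ S^(n-1) ⊗ S^1 ⟶ ⋯ ⟶ S^1 ⊗ S^(n-1) ⟶ S^n ⟶ 0`, which is exact except at the first
term, where the kernel consists of the squares. Since `I` is additive, `Ext(I, S^a ⊗ S^b) = 0` for
`a, b > 0`. So the cokernel of the Frobenius `S^(2^h) ⟶ S^(2^(h+1))` has the `Ext`-groups of
`S^(2^(h+1))`, shifted by `2^(h+1) - 1`, and there is a long exact sequence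
`⋯ ⟶ Ext^(i-2^(h+1))(I, S^(2^(h+1))) ⟶ Ext^i(I, S^(2^h)) ⟶ Ext^i(I, S^(2^(h+1))) ⟶ ⋯`.
In particular the Frobenius is injective on `Ext^i(I, S^(2^h))` for `i < 2^(h+1)`.

On the other hand, a high iterate of the Frobenius is zero on `Ext^i` for `i > 0`. Evaluation at the
points over a large finite field with `q` elements maps the polynomials of degree at most `d` to an
injective functor. The cokernel `C` vanishes on spaces of small dimension, which for large `d`
implies `Ext^(i-1)(I, C) = 0`. Hence a map on the polynomials of degree at most `d` that kills those
which vanish at all points is zero on `Ext^i`. For large `k` such a map is given by substituting the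
additive polynomial `x + x^q + ⋯ + x^(q^k)` for each variable and taking the component of degree
`2^h q^k`. On `S^(2^h)` it is an iterate of the Frobenius.

Together these determine `Ext^i(I, S^(2^h))` for `i < 2^(h+1)`. By the long exact sequences
`Ext^i(I, S^(2^h))` is then `𝔽₂` for all `i` divisible by `2^(h+1)`, and zero for all other `i`. For
`h = 0` this is the theorem.
-/

namespace MacLane

universe u v w

open CategoryTheory.Abelian

section Ext

variable {𝒟 : Type*} [Category* 𝒟] [Abelian 𝒟] [HasExt.{w} 𝒟] (A : 𝒟)

/-- The map `Ext^n(A, F) → Ext^n(A, G)` induced by a morphism `F ⟶ G`. -/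
def extMap {F G : 𝒟} (f : F ⟶ G) (n : ℕ) : Ext A F n →+ Ext A G n :=
  (Ext.mk₀ f).postcomp A (add_zero n)

lemma extMap_apply {F G : 𝒟} (f : F ⟶ G) (n : ℕ) (x : Ext A F n) :
    extMap A f n x = x.comp (Ext.mk₀ f) (add_zero n) := rfl

lemma extMap_id (F : 𝒟) (n : ℕ) : extMap A (𝟙 F) n = AddMonoidHom.id _ := by
  ext x
  exact Ext.comp_mk₀_id x

lemma extMap_comp {F G H : 𝒟} (f : F ⟶ G) (g : G ⟶ H) (n : ℕ) :
    extMap A (f ≫ g) n = (extMap A g n).comp (extMap A f n) := by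
  ext x
  rw [AddMonoidHom.comp_apply, extMap_apply, extMap_apply, extMap_apply,
    Ext.comp_assoc_of_third_deg_zero, Ext.mk₀_comp_mk₀]

lemma extMap_zero (F G : 𝒟) (n : ℕ) : extMap A (0 : F ⟶ G) n = 0 := by
  ext x
  rw [extMap_apply, Ext.mk₀_zero, Ext.comp_zero, AddMonoidHom.zero_apply]

/-- The isomorphism `Ext^n(A, F) ≃ Ext^n(A, G)` induced by an isomorphism `F ≅ G`. -/
def extCongr {F G : 𝒟} (e : F ≅ G) (n : ℕ) : Ext A F n ≃+ Ext A G n :=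
  (extMap A e.hom n).toAddEquiv (extMap A e.inv n)
    (by rw [← extMap_comp, e.hom_inv_id, extMap_id])
    (by rw [← extMap_comp, e.inv_hom_id, extMap_id])

lemma extMap_zero_injective {F G : 𝒟} (f : F ⟶ G) [Mono f] : Function.Injective (extMap A f 0) :=
  Ext.postcomp_mk₀_injective_of_mono A f

variable {S : ShortComplex 𝒟}

/-- The connecting map `Ext^n(A, S₃) → Ext^{n+1}(A, S₁)` of a short exact sequence `S`. -/
def extδ (hS : S.ShortExact) (n : ℕ) : Ext A S.X₃ n →+ Ext A S.X₁ (n + 1) :=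
  hS.extClass.postcomp A rfl

lemma exact_extMap_extMap (hS : S.ShortExact) (n : ℕ) :
    Function.Exact (extMap A S.f n) (extMap A S.g n) := fun x =>
  ⟨fun h => Ext.covariant_sequence_exact₂ A hS x h, by
    rintro ⟨y, rfl⟩
    rw [← AddMonoidHom.comp_apply, ← extMap_comp, S.zero, extMap_zero, AddMonoidHom.zero_apply]⟩

lemma exact_extMap_extδ (hS : S.ShortExact) (n : ℕ) :
    Function.Exact (extMap A S.g n) (extδ A hS n) := fun x =>
  ⟨fun h => Ext.covariant_sequence_exact₃ A hS x rfl h, by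
    rintro ⟨y, rfl⟩
    change (y.comp (Ext.mk₀ S.g) (add_zero n)).comp hS.extClass rfl = 0
    rw [Ext.comp_assoc_of_second_deg_zero, hS.comp_extClass, Ext.comp_zero]⟩

lemma exact_extδ_extMap (hS : S.ShortExact) (n : ℕ) :
    Function.Exact (extδ A hS n) (extMap A S.f (n + 1)) := fun x =>
  ⟨fun h => Ext.covariant_sequence_exact₁ A hS x h rfl, by
    rintro ⟨y, rfl⟩
    change (y.comp hS.extClass rfl).comp (Ext.mk₀ S.f) (add_zero (n + 1)) = 0
    rw [Ext.comp_assoc_of_third_deg_zero, hS.extClass_comp, Ext.comp_zero]⟩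

end Ext

section Exact

variable {G H K : Type*} [AddCommGroup G] [AddCommGroup H] [AddCommGroup K]
  {f : G →+ H} {g : H →+ K}

lemma injective_of_exact_of_subsingleton (h : Function.Exact f g) [Subsingleton G] :
    Function.Injective g := by
  refine (injective_iff_map_eq_zero g).2 fun b hb => ?_
  obtain ⟨a, rfl⟩ := (h b).1 hb
  rw [Subsingleton.elim a 0, map_zero]

lemma surjective_of_exact_of_subsingleton (h : Function.Exact f g) [Subsingleton K] :
    Function.Surjective f := fun b => (h b).1 (Subsingleton.elim _ _)

lemma subsingleton_of_exact (h : Function.Exact f g) [Subsingleton G] [Subsingleton K] :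
    Subsingleton H :=
  (injective_of_exact_of_subsingleton h).subsingleton

end Exact

section DimensionShift

variable {ℬ 𝒟 : Type*} [Category* ℬ] [Abelian ℬ] [Category* 𝒟] [Abelian 𝒟] [EnoughInjectives ℬ]
  [HasExt.{w} 𝒟] {R R' : ℬ ⥤ 𝒟} [R.PreservesZeroMorphisms] [PreservesFiniteLimits R]
  [PreservesFiniteColimits R] [R'.PreservesZeroMorphisms] [PreservesFiniteLimits R']
  [PreservesFiniteColimits R']

lemma extMap_app_eq_zero (hR : ∀ J [Injective J], Injective (R.obj J)) (τ : R ⟶ R') {A : 𝒟}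
    (h : ∀ H (φ : A ⟶ R.obj H), φ ≫ τ.app H = 0) (H : ℬ) (n : ℕ) : extMap A (τ.app H) n = 0 := by
  induction n generalizing H with
  | zero =>
    ext x
    obtain ⟨φ, rfl⟩ := (Ext.mk₀_bijective _ _).2 x
    rw [extMap_apply, Ext.mk₀_comp_mk₀, h, Ext.mk₀_zero, AddMonoidHom.zero_apply]
  | succ n ih =>
    ext x
    let S : ShortComplex ℬ := ShortComplex.mk _ _ (cokernel.condition (Injective.ι H))
    have hS : S.ShortExact := { exact := ShortComplex.exact_cokernel _ }
    have hRS := hS.map_of_exact R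
    have hRS' := hS.map_of_exact R'
    have hinj : Injective (S.map R).X₂ := hR (Injective.under H)
    obtain ⟨y, rfl⟩ := (exact_extδ_extMap A hRS n x).1 (Ext.eq_zero_of_injective _)
    have hnat : hRS.extClass.comp (Ext.mk₀ (τ.app H)) (add_zero 1) =
        (Ext.mk₀ (τ.app S.X₃)).comp hRS'.extClass (zero_add 1) :=
      ShortComplex.ShortExact.extClass_naturality hRS hRS' (S.mapNatTrans τ)
    change (y.comp hRS.extClass rfl).comp (Ext.mk₀ (τ.app H)) (add_zero (n + 1)) = 0
    have hy : y.comp (Ext.mk₀ (τ.app S.X₃)) (add_zero n) = 0 := DFunLike.congr_fun (ih S.X₃) y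
    refine (Ext.comp_assoc_of_third_deg_zero ..).trans ?_
    rw [hnat]
    refine (Ext.comp_assoc_of_second_deg_zero ..).symm.trans ?_
    exact (congrArg (fun z => Ext.comp z hRS'.extClass rfl) hy).trans (Ext.zero_comp ..)

end DimensionShift

section CrossEffect

variable {𝒞 𝒟 : Type*} [Category* 𝒞] [Preadditive 𝒞] [HasBinaryBiproducts 𝒞] [Category* 𝒟]

variable (𝒞) in
/-- The doubling functor `V ↦ V ⊕ V`. -/
abbrev double : 𝒞 ⥤ 𝒞 where
  obj V := V ⊞ V
  map f := biprod.map f f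

variable (𝒞) in
/-- The doubling functor is its own adjoint, because finite products are coproducts. -/
def doubleAdjunction : double 𝒞 ⊣ double 𝒞 :=
  Adjunction.mkOfHomEquiv
    { homEquiv := fun V W =>
        { toFun := fun f => biprod.lift (biprod.inl ≫ f) (biprod.inr ≫ f)
          invFun := fun g => biprod.desc (g ≫ biprod.fst) (g ≫ biprod.snd)
          left_inv := fun f => by ext <;> simp
          right_inv := fun g => by ext <;> simp }
      homEquiv_naturality_left_symm := fun f g => by dsimp; ext <;> simp
      homEquiv_naturality_right := fun f g => by dsimp; ext <;> simp }

variable (𝒞 𝒟) in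
/-- Precomposition with the doubling functor. -/
abbrev predouble : (𝒞 ⥤ 𝒟) ⥤ 𝒞 ⥤ 𝒟 := (Functor.whiskeringLeft 𝒞 𝒞 𝒟).obj (double 𝒞)

lemma injective_predouble_obj [Abelian 𝒟] (J : 𝒞 ⥤ 𝒟) [Injective J] :
    Injective ((predouble 𝒞 𝒟).obj J) :=
  Injective.injective_of_adjoint ((doubleAdjunction 𝒞).whiskerLeft 𝒟) J

/-- The natural endomorphism of `V ⊕ V` with diagonal entries `a` and `b`, here for
`a, b ∈ {0, 1}`. -/
abbrev doubleEnd (a b : 𝟭 𝒞 ⟶ 𝟭 𝒞) : double 𝒞 ⟶ double 𝒞 where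
  app V := biprod.map (a.app V) (b.app V)
  naturality V W f := by
    have ha := a.naturality f
    have hb := b.naturality f
    dsimp at ha hb ⊢
    ext <;> simp [ha, hb]

variable [Preadditive 𝒟]

variable (𝒞 𝒟) in
/-- The projector of `F(V ⊕ V)` onto the cross effect of `F`. -/
def crossProj : predouble 𝒞 𝒟 ⟶ predouble 𝒞 𝒟 :=
  𝟙 _ - (Functor.whiskeringLeft 𝒞 𝒞 𝒟).map (doubleEnd (𝟙 _) 0) -
    (Functor.whiskeringLeft 𝒞 𝒞 𝒟).map (doubleEnd 0 (𝟙 _)) +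
      (Functor.whiskeringLeft 𝒞 𝒞 𝒟).map (doubleEnd 0 0)

/-- A natural transformation from an additive functor to `V ↦ F(V ⊕ V)` is additive in each
summand, so it avoids the cross effect. -/
lemma comp_crossProj_app {A : 𝒞 ⥤ 𝒟} [A.Additive] (F : 𝒞 ⥤ 𝒟)
    (φ : A ⟶ (predouble 𝒞 𝒟).obj F) : φ ≫ (crossProj 𝒞 𝒟).app F = 0 := by
  ext V
  have key (f g : V ⟶ V) : φ.app V ≫ F.map (biprod.map f g) =
      A.map (biprod.lift f g) ≫ φ.app (V ⊞ V) ≫ F.map (biprod.map biprod.fst biprod.snd) := by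
    have nat : A.map (biprod.lift f g) ≫ φ.app (V ⊞ V) =
        φ.app V ≫ F.map (biprod.map (biprod.lift f g) (biprod.lift f g)) := φ.naturality _
    rw [reassoc_of% nat, ← F.map_comp]
    congr 2
    ext <;> simp
  have h₀ : φ.app V ≫ F.map (biprod.map (0 : V ⟶ V) (0 : V ⟶ V)) = 0 := by
    rw [key, show biprod.lift (0 : V ⟶ V) (0 : V ⟶ V) = 0 by ext <;> simp, A.map_zero, zero_comp]
  have h₁ : φ.app V = φ.app V ≫ F.map (biprod.map (𝟙 V) 0) + φ.app V ≫ F.map (biprod.map 0 (𝟙 V)) :=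
    calc φ.app V = φ.app V ≫ F.map (biprod.map (𝟙 V) (𝟙 V)) := by
          rw [show biprod.map (𝟙 V) (𝟙 V) = 𝟙 (V ⊞ V) by ext <;> simp, F.map_id]
          exact (Category.comp_id _).symm
      _ = _ := by
          rw [key, key, key, ← Preadditive.add_comp, ← A.map_add]
          congr 2
          ext <;> simp
  let e : F.obj (V ⊞ V) ⟶ F.obj (V ⊞ V) := 𝟙 _ - F.map (biprod.map (𝟙 V) 0) -
    F.map (biprod.map 0 (𝟙 V)) + F.map (biprod.map 0 0)
  change φ.app V ≫ e = 0
  rw [Preadditive.comp_add, Preadditive.comp_sub, Preadditive.comp_sub, h₀, add_zero, sub_sub, ← h₁]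
  exact sub_eq_zero.2 (Category.comp_id _)

/-- The component of `F(Δ) : F(V) ⟶ F(V ⊕ V)` in the cross effect of `F`, where `Δ` is the
diagonal of `V`. -/
def crossDiag (F : 𝒞 ⥤ 𝒟) : F ⟶ double 𝒞 ⋙ F :=
  F.leftUnitor.inv ≫ Functor.whiskerRight { app V := biprod.lift (𝟙 V) (𝟙 V) } F ≫
    (crossProj 𝒞 𝒟).app F

lemma crossDiag_app (F : 𝒞 ⥤ 𝒟) (V : 𝒞) :
    (crossDiag F).app V = F.map (biprod.lift (𝟙 V) (𝟙 V)) - F.map biprod.inl - F.map biprod.inr +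
      F.map (0 : V ⟶ V ⊞ V) := by
  let e : F.obj (V ⊞ V) ⟶ F.obj (V ⊞ V) := 𝟙 _ - F.map (biprod.map (𝟙 V) 0) -
    F.map (biprod.map 0 (𝟙 V)) + F.map (biprod.map 0 0)
  have h (e : V ⊞ V ⟶ V ⊞ V) :
      F.map (biprod.lift (𝟙 V) (𝟙 V)) ≫ F.map e = F.map (biprod.lift (𝟙 V) (𝟙 V) ≫ e) :=
    (F.map_comp _ _).symm
  calc (crossDiag F).app V = 𝟙 (F.obj V) ≫ F.map (biprod.lift (𝟙 V) (𝟙 V)) ≫ e := rfl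
    _ = _ := by
      rw [Category.id_comp, Preadditive.comp_add, Preadditive.comp_sub, Preadditive.comp_sub,
        Category.comp_id, h, h, h]
      congr 3
      · congr 2
        ext <;> simp
      · ext <;> simp
      · ext <;> simp

end CrossEffect

section Vanishing

variable {𝒞 𝒟 : Type*} [Category* 𝒞] [Preadditive 𝒞] [HasBinaryBiproducts 𝒞] [Category* 𝒟]
  [Abelian 𝒟] [EnoughInjectives (𝒞 ⥤ 𝒟)] [HasExt.{w} (𝒞 ⥤ 𝒟)] (A : 𝒞 ⥤ 𝒟) [A.Additive]

lemma extMap_crossDiag (F : 𝒞 ⥤ 𝒟) (n : ℕ) : extMap A (crossDiag F) n = 0 := by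
  rw [crossDiag, ← Category.assoc, extMap_comp,
    extMap_app_eq_zero injective_predouble_obj _ comp_crossProj_app, AddMonoidHom.zero_comp]

lemma subsingleton_ext_of_crossDiag_comp {F : 𝒞 ⥤ 𝒟} (q : double 𝒞 ⋙ F ⟶ F)
    (hq : crossDiag F ≫ q = 𝟙 F) (n : ℕ) : Subsingleton (Ext A F n) := by
  refine subsingleton_of_forall_eq 0 fun x => ?_
  rw [← AddMonoidHom.id_apply _ x, ← extMap_id, ← hq, extMap_comp, extMap_crossDiag,
    AddMonoidHom.comp_zero, AddMonoidHom.zero_apply]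

end Vanishing

section Mono

variable {𝒞 𝒟 : Type*} [Category* 𝒞] [Preadditive 𝒞] [HasBinaryBiproducts 𝒞] [Category* 𝒟]
  [Preadditive 𝒟]

lemma comp_map_add {F : 𝒞 ⥤ 𝒟} [F.PreservesZeroMorphisms] {V W : 𝒞} {X : 𝒟} {x : X ⟶ F.obj V}
    (hx : x ≫ (crossDiag F).app V = 0) (f g : V ⟶ W) :
    x ≫ F.map (f + g) = x ≫ F.map f + x ≫ F.map g := by
  have h : x ≫ (crossDiag F).app V ≫ F.map (biprod.desc f g) = 0 := by
    rw [reassoc_of% hx, zero_comp]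
  rw [crossDiag_app, Preadditive.add_comp, Preadditive.sub_comp, Preadditive.sub_comp,
    ← F.map_comp, ← F.map_comp, ← F.map_comp, biprod.lift_desc, biprod.inl_desc, biprod.inr_desc,
    F.map_zero, zero_comp, add_zero, Category.id_comp, Category.id_comp, sub_sub,
    Preadditive.comp_sub, sub_eq_zero, Preadditive.comp_add] at h
  exact h

end Mono

section Connectivity

variable {k : Type v} [Field k] {𝒟 : Type*} [Category* 𝒟] [Abelian 𝒟]

lemma exists_id_eq_sum_rank_le_one (V : FGModuleCat.{u} k) :
    ∃ (n : ℕ) (P : Fin n → FGModuleCat.{u} k) (p : ∀ i, V ⟶ P i) (s : ∀ i, P i ⟶ V),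
      (∀ i, Module.finrank k (P i) ≤ 1) ∧ 𝟙 V = ∑ i, p i ≫ s i := by
  let b := Module.finBasis k V
  let P i := Submodule.span k {b i}
  let p i : V →ₗ[k] P i :=
    LinearMap.toSpanSingleton k _ ⟨b i, Submodule.mem_span_singleton_self (b i)⟩ ∘ₗ b.coord i
  have hid : LinearMap.id = ∑ i, (P i).subtype ∘ₗ p i := LinearMap.ext fun v => by
    rw [LinearMap.sum_apply]
    exact (b.sum_repr v).symm
  let φ : (V →ₗ[k] V) →+ (V ⟶ V) :=
    { toFun := FGModuleCat.ofHom, map_zero' := rfl, map_add' := fun _ _ => rfl }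
  refine ⟨_, fun i => FGModuleCat.of k (P i), fun i => FGModuleCat.ofHom (p i),
    fun i => FGModuleCat.ofHom (P i).subtype,
    fun i => (finrank_span_singleton (b.ne_zero i)).le, ?_⟩
  exact (congrArg φ hid).trans (map_sum φ _ _)

lemma finrank_biprod_self_le (V : FGModuleCat.{u} k) :
    Module.finrank k (V ⊞ V : FGModuleCat k) ≤ 2 * Module.finrank k V := by
  let f : (V × V) →ₗ[k] (V ⊞ V : FGModuleCat k) :=
    LinearMap.coprod (biprod.inl : V ⟶ V ⊞ V).hom.hom (biprod.inr : V ⟶ V ⊞ V).hom.hom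
  have hf : Function.Surjective f := fun z =>
    ⟨((biprod.fst : V ⊞ V ⟶ V).hom.hom z, (biprod.snd : V ⊞ V ⟶ V).hom.hom z),
      congrArg (fun g : V ⊞ V ⟶ V ⊞ V => g.hom.hom z) biprod.total⟩
  calc _ ≤ Module.finrank k (V × V) := LinearMap.finrank_le_finrank_of_surjective hf
    _ = _ := by rw [Module.finrank_prod, two_mul]

variable {F : FGModuleCat.{u} k ⥤ 𝒟}

lemma mono_crossDiag (hF : ∀ V : FGModuleCat.{u} k, Module.finrank k V ≤ 1 → IsZero (F.obj V)) :
    Mono (crossDiag F) := by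
  have hF₀ : F.PreservesZeroMorphisms := ⟨fun V W => by
    let P := FGModuleCat.of k PUnit.{u + 1}
    have hP : Module.finrank k P ≤ 1 :=
      (Module.finrank_zero_of_subsingleton (M := PUnit.{u + 1})).trans_le zero_le_one
    rw [← zero_comp (f := (0 : P ⟶ W)), F.map_comp, (hF P hP).eq_of_tgt (F.map _) 0, zero_comp]⟩
  have (V : FGModuleCat.{u} k) : Mono ((crossDiag F).app V) := by
    refine Preadditive.mono_of_cancel_zero _ fun x hx => ?_
    obtain ⟨n, P, p, s, hP, hid⟩ := exists_id_eq_sum_rank_le_one V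
    let φ : (V ⟶ V) →+ (_ ⟶ F.obj V) :=
      { toFun := fun f => x ≫ F.map f
        map_zero' := by rw [F.map_zero, comp_zero]
        map_add' := comp_map_add hx }
    calc x = φ (𝟙 V) := by
          change x = x ≫ F.map (𝟙 V)
          rw [F.map_id, Category.comp_id]
      _ = ∑ i, φ (p i ≫ s i) := by rw [hid, map_sum]
      _ = 0 := Finset.sum_eq_zero fun i _ => by
          change x ≫ F.map (p i ≫ s i) = 0
          rw [F.map_comp, (hF _ (hP i)).eq_of_tgt (F.map (p i)) 0, zero_comp, comp_zero]
  exact NatTrans.mono_of_mono_app _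

variable (A : FGModuleCat.{u} k ⥤ 𝒟) [A.Additive]

lemma eq_zero_of_isZero_finrank_le_one
    (hF : ∀ V : FGModuleCat.{u} k, Module.finrank k V ≤ 1 → IsZero (F.obj V)) (φ : A ⟶ F) :
    φ = 0 := by
  ext V
  obtain ⟨n, P, p, s, hP, hid⟩ := exists_id_eq_sum_rank_le_one V
  calc φ.app V = A.map (𝟙 V) ≫ φ.app V := by rw [A.map_id, Category.id_comp]
    _ = ∑ i, A.map (p i ≫ s i) ≫ φ.app V := by rw [hid, A.map_sum, Preadditive.sum_comp]
    _ = 0 := Finset.sum_eq_zero fun i _ => by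
      rw [A.map_comp, Category.assoc, φ.naturality, (hF _ (hP i)).eq_of_tgt (φ.app (P i)) 0,
        zero_comp, comp_zero]

/-- As `F` embeds into `F(V ⊕ V)` by a map that is zero on `Ext`, the group `Ext^(n+1)(A, F)` is the
image of `Ext^n(A, C)` for the cokernel `C`, and `C` vanishes in half the range of dimensions. -/
theorem subsingleton_ext_of_isZero_finrank_le [EnoughInjectives (FGModuleCat.{u} k ⥤ 𝒟)]
    [HasExt.{w} (FGModuleCat.{u} k ⥤ 𝒟)] (n : ℕ)
    (hF : ∀ V : FGModuleCat.{u} k, Module.finrank k V ≤ 2 ^ n → IsZero (F.obj V)) :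
    Subsingleton (Ext A F n) := by
  induction n generalizing F with
  | zero =>
    refine subsingleton_of_forall_eq 0 fun x => ?_
    obtain ⟨φ, rfl⟩ := (Ext.mk₀_bijective _ _).2 x
    rw [eq_zero_of_isZero_finrank_le_one A hF φ, Ext.mk₀_zero]
  | succ n ih =>
    have := mono_crossDiag fun V hV => hF V (hV.trans Nat.one_le_two_pow)
    let S : ShortComplex (FGModuleCat.{u} k ⥤ 𝒟) :=
      ShortComplex.mk _ _ (cokernel.condition (crossDiag F))
    have hS : S.ShortExact := { exact := ShortComplex.exact_cokernel _ }
    have hC : Subsingleton (Ext A S.X₃ n) := ih fun V hV => by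
      refine IsZero.of_epi (S.g.app V) (hF (V ⊞ V) ((finrank_biprod_self_le V).trans ?_))
      rw [pow_succ']
      exact Nat.mul_le_mul_left 2 hV
    refine subsingleton_of_forall_eq 0 fun x => ?_
    obtain ⟨y, rfl⟩ := (exact_extδ_extMap A hS n x).1
      (DFunLike.congr_fun (extMap_crossDiag A F (n + 1)) x)
    rw [Subsingleton.elim y 0, map_zero]

end Connectivity

section InjectiveTarget

variable {𝒟 : Type*} [Category* 𝒟] [Abelian 𝒟] [HasExt.{w} 𝒟] (A : 𝒟)

lemma extMap_eq_zero_of_kernel_ι_comp {R U G : 𝒟} (ε : R ⟶ U) [Injective U] {Θ : R ⟶ G}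
    (h : kernel.ι ε ≫ Θ = 0) (n : ℕ) [Subsingleton (Ext A (cokernel ε) n)] :
    extMap A Θ (n + 1) = 0 := by
  let S : ShortComplex 𝒟 := ShortComplex.mk _ _ (kernel.condition (cokernel.π ε))
  have hS : S.ShortExact := { exact := ShortComplex.exact_kernel _ }
  have : Subsingleton (Ext A S.X₃ n) := ‹_›
  have : Injective S.X₂ := ‹_›
  have : Subsingleton (Ext A S.X₂ (n + 1)) := subsingleton_of_forall_eq 0 Ext.eq_zero_of_injective
  have : Subsingleton (Ext A (Abelian.image ε) (n + 1)) :=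
    subsingleton_of_exact (exact_extδ_extMap A hS n)
  have : Subsingleton (Ext A (Abelian.coimage ε) (n + 1)) :=
    (extCongr A (Abelian.coimageIsoImage ε) (n + 1)).subsingleton
  rw [← cokernel.π_desc (kernel.ι ε) Θ h, extMap_comp]
  ext x
  rw [AddMonoidHom.comp_apply, Subsingleton.elim (extMap A (Abelian.coimage.π ε) (n + 1) x) 0,
    map_zero, AddMonoidHom.zero_apply]

end InjectiveTarget

section EnoughInjectives

variable {𝒞 𝒟 : Type*} [Category* 𝒞] [Category* 𝒟] [Abelian 𝒟]
  [∀ a b : 𝒞, HasProductsOfShape (a ⟶ b) 𝒟]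

instance injective_evaluationRightAdjoint_obj (c : 𝒞) (M : 𝒟) [Injective M] :
    Injective ((evaluationRightAdjoint 𝒟 c).obj M) :=
  Injective.injective_of_adjoint (evaluationAdjunctionLeft 𝒟 c) M

lemma enoughInjectives_functor [EnoughInjectives 𝒟] {ι : Type*} [HasProductsOfShape ι 𝒟]
    (c : ι → 𝒞) (hc : ∀ V, ∃ i, Nonempty (V ≅ c i)) : EnoughInjectives (𝒞 ⥤ 𝒟) where
  presentation F := by
    let J (i : ι) : 𝒞 ⥤ 𝒟 := (evaluationRightAdjoint 𝒟 (c i)).obj (Injective.under (F.obj (c i)))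
    have hJ (i : ι) : Injective (J i) := injective_evaluationRightAdjoint_obj _ _
    let adj (i : ι) := evaluationAdjunctionLeft 𝒟 (c i)
    let φ (i : ι) : F ⟶ J i := (adj i).homEquiv _ _ (Injective.ι (F.obj (c i)))
    have hφ : Mono (Pi.lift φ) := ⟨fun {G} x y h => by
      have hxy (i : ι) : x.app (c i) = y.app (c i) := by
        have hφ : x ≫ φ i = y ≫ φ i := by
          rw [← Pi.lift_π φ i, reassoc_of% h]
        rw [← (adj i).homEquiv_naturality_left, ← (adj i).homEquiv_naturality_left] at hφ
        exact (cancel_mono (Injective.ι (F.obj (c i)))).1 (((adj i).homEquiv _ _).injective hφ)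
      ext V
      obtain ⟨i, ⟨e⟩⟩ := hc V
      rw [← cancel_mono (F.map e.hom), ← x.naturality, ← y.naturality, hxy]⟩
    exact ⟨{ J := ∏ᶜ J, f := Pi.lift φ }⟩

instance enoughInjectives_functor_FGModuleCat {k : Type v} [Field k] {𝒟 : Type*} [Category* 𝒟]
    [Abelian 𝒟] [HasProducts.{u} 𝒟] [EnoughInjectives 𝒟] :
    EnoughInjectives (FGModuleCat.{u} k ⥤ 𝒟) := by
  have : HasProductsOfShape ℕ 𝒟 := hasLimitsOfShape_of_equivalence
    (Discrete.equivalence Equiv.ulift.{u})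
  let c (n : ℕ) : FGModuleCat.{u} k :=
    Classical.epsilon fun V : FGModuleCat.{u} k => Module.finrank k V = n
  have hc (V : FGModuleCat.{u} k) : Module.finrank k V =
      Module.finrank k (c (Module.finrank k V)) :=
    (Classical.epsilon_spec (p := fun W : FGModuleCat.{u} k => Module.finrank k W = _)
      ⟨V, rfl⟩).symm
  exact enoughInjectives_functor c fun V =>
    ⟨Module.finrank k V, ⟨(LinearEquiv.ofFinrankEq V _ (hc V)).toFGModuleCatIso⟩⟩

end EnoughInjectives

section Pointwise

variable {𝒞 : Type*} [Category* 𝒞] {k : Type v} [Ring k] {F G H : 𝒞 ⥤ ModuleCat.{u} k}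

lemma mono_of_injective_app {φ : F ⟶ G} (h : ∀ V, Function.Injective (φ.app V)) : Mono φ :=
  have (V : 𝒞) : Mono (φ.app V) := (ModuleCat.mono_iff_injective _).2 (h V)
  NatTrans.mono_of_mono_app φ

lemma epi_of_surjective_app {φ : F ⟶ G} (h : ∀ V, Function.Surjective (φ.app V)) : Epi φ :=
  have (V : 𝒞) : Epi (φ.app V) := (ModuleCat.epi_iff_surjective _).2 (h V)
  NatTrans.epi_of_epi_app φ

lemma shortExact_of_exact_app {f : F ⟶ G} {g : G ⟶ H} (w : f ≫ g = 0)
    (hf : ∀ V, Function.Injective (f.app V)) (hg : ∀ V, Function.Surjective (g.app V))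
    (hfg : ∀ V (y : G.obj V), g.app V y = 0 → ∃ x, f.app V x = y) :
    (ShortComplex.mk f g w).ShortExact := by
  have := mono_of_injective_app hf
  have := epi_of_surjective_app hg
  refine ShortComplex.ShortExact.mk ?_
  rw [ShortComplex.exact_iff_isZero_homology, Functor.isZero_iff]
  intro V
  have e := (ShortComplex.mk f g w).mapHomologyIso ((evaluation _ _).obj V)
  refine IsZero.of_iso ?_ e.symm
  rw [← ShortComplex.exact_iff_isZero_homology, ShortComplex.moduleCat_exact_iff]
  exact hfg V

end Pointwise

section Subfunctor

variable {𝒞 : Type*} [Category* 𝒞] {K : Type v} [Ring K] {P Q : 𝒞 ⥤ ModuleCat.{w} K}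

/-- A family of submodules of the values of `P` that is stable under the action of morphisms,
used to cut functors out of a large ambient functor. -/
structure ModuleSubfunctor (P : 𝒞 ⥤ ModuleCat.{w} K) where
  carrier (V : 𝒞) : Submodule K (P.obj V)
  map_mem {V W : 𝒞} (f : V ⟶ W) {x : P.obj V} (hx : x ∈ carrier V) : P.map f x ∈ carrier W

namespace ModuleSubfunctor

/-- A subfunctor of `P` as a functor in its own right. -/
def toFunctor (N : ModuleSubfunctor P) : 𝒞 ⥤ ModuleCat.{w} K where
  obj V := ModuleCat.of K (N.carrier V)
  map f := ModuleCat.ofHom ((P.map f).hom.restrict fun _ hx => N.map_mem f hx)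
  map_id V := by
    ext x
    exact congrArg (fun φ : P.obj V ⟶ P.obj V => φ x.1) (P.map_id V)
  map_comp {V W X} f g := by
    ext x
    exact congrArg (fun φ : P.obj V ⟶ P.obj X => φ x.1) (P.map_comp f g)

/-- The restriction of a natural transformation to subfunctors. -/
def restrict (N : ModuleSubfunctor P) (N' : ModuleSubfunctor Q) (φ : P ⟶ Q)
    (h : ∀ V, ∀ x ∈ N.carrier V, φ.app V x ∈ N'.carrier V) : N.toFunctor ⟶ N'.toFunctor where
  app V := ModuleCat.ofHom ((φ.app V).hom.restrict (h V))
  naturality {V W} f := by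
    ext x
    exact Subtype.ext (congrArg (fun ψ : P.obj V ⟶ Q.obj W => ψ x.1) (φ.naturality f))

/-- Natural transformations that are mutually inverse on subfunctors give an isomorphism. -/
def restrictIso (N : ModuleSubfunctor P) (N' : ModuleSubfunctor Q) (φ : P ⟶ Q) (ψ : Q ⟶ P)
    (hφ : ∀ V, ∀ x ∈ N.carrier V, φ.app V x ∈ N'.carrier V ∧ ψ.app V (φ.app V x) = x)
    (hψ : ∀ V, ∀ x ∈ N'.carrier V, ψ.app V x ∈ N.carrier V ∧ φ.app V (ψ.app V x) = x) :
    N.toFunctor ≅ N'.toFunctor where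
  hom := N.restrict N' φ fun V x hx => (hφ V x hx).1
  inv := N'.restrict N ψ fun V x hx => (hψ V x hx).1
  hom_inv_id := by
    ext V x
    exact Subtype.ext (hφ V x.1 x.2).2
  inv_hom_id := by
    ext V x
    exact Subtype.ext (hψ V x.1 x.2).2

end ModuleSubfunctor

end Subfunctor

section WeightedHomogeneous

open MvPolynomial

variable {R σ M : Type*} [CommSemiring R] [AddCommMonoid M] {w : σ → M} {c : M}
  {p : MvPolynomial σ R}

lemma aeval_mem_of_isWeightedHomogeneous {B : Type*} [CommSemiring B] [Algebra R B]
    (A : M → Submodule R B) [SetLike.GradedMonoid A] {f : σ → B} (hf : ∀ i, f i ∈ A (w i))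
    (hp : p.IsWeightedHomogeneous w c) : aeval f p ∈ A c := by
  rw [aeval_def, eval₂_eq]
  refine Submodule.sum_mem _ fun m hm => ?_
  rw [← Algebra.smul_def]
  refine Submodule.smul_mem _ _ ?_
  rw [← hp (mem_support_iff.1 hm), Finsupp.weight_apply, Finsupp.sum]
  exact SetLike.prod_pow_mem_graded _ _ _ _ fun i _ => hf i

lemma isWeightedHomogeneous_aeval {τ : Type*} {w' : τ → M} {f : σ → MvPolynomial τ R}
    (hf : ∀ i, (f i).IsWeightedHomogeneous w' (w i)) (hp : p.IsWeightedHomogeneous w c) :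
    (aeval f p).IsWeightedHomogeneous w' c :=
  have := WeightedHomogeneousSubmodule.gradedMonoid (R := R) (w := w')
  aeval_mem_of_isWeightedHomogeneous (weightedHomogeneousSubmodule R w') hf hp

lemma isWeightedHomogeneous_comp_iff {M' : Type*} [AddCommMonoid M'] {φ : M →+ M'}
    (hφ : Function.Injective φ) :
    p.IsWeightedHomogeneous (φ ∘ w) (φ c) ↔ p.IsWeightedHomogeneous w c := by
  have h (m : σ →₀ ℕ) : Finsupp.weight (φ ∘ w) m = φ (Finsupp.weight w m) := by
    simp only [Finsupp.weight_apply, map_finsuppSum, map_nsmul, Function.comp_apply]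
  simp only [IsWeightedHomogeneous, h, hφ.eq_iff]

lemma le_of_mem_vars_of_isWeightedHomogeneous [PartialOrder M]
    [IsOrderedAddMonoid M] [CanonicallyOrderedAdd M]
    (hp : p.IsWeightedHomogeneous w c) {i : σ} (hi : i ∈ p.vars) : w i ≤ c := by
  obtain ⟨m, hm, him⟩ := (mem_vars_iff_mem_support i).1 hi
  rw [← hp (mem_support_iff.1 hm)]
  exact Finsupp.le_weight_of_ne_zero' w (Finsupp.mem_support_iff.1 him)

lemma algHom_eq_zero_of_isWeightedHomogeneous {B : Type*} [CommSemiring B] [Algebra R B]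
    (N : AddSubmonoid M) {φ : MvPolynomial σ R →ₐ[R] B} (hφ : ∀ i, w i ∉ N → φ (X i) = 0)
    (hp : p.IsWeightedHomogeneous w c) (hc : c ∉ N) : φ p = 0 := by
  rw [aeval_unique φ, aeval_def, eval₂_eq]
  refine Finset.sum_eq_zero fun m hm => ?_
  obtain ⟨i, hi, hwi⟩ : ∃ i ∈ m.support, w i ∉ N := by
    by_contra! h
    refine hc (hp (mem_support_iff.1 hm) ▸ ?_)
    exact AddSubmonoid.sum_mem _ fun i hi => AddSubmonoid.nsmul_mem _ (h i hi) _
  rw [Finset.prod_eq_zero hi, mul_zero]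
  rw [Function.comp_apply, hφ i hwi, zero_pow (Finsupp.mem_support_iff.1 hi)]

end WeightedHomogeneous

section Polynomial

open MvPolynomial

variable (K : Type v) [Field K] {J : Type}

/-- The index set of a chosen basis of `V`. -/
abbrev Coord {K : Type v} [Field K] (V : FGModuleCat.{u} K) : Type u :=
  Module.Free.ChooseBasisIndex K V

variable (J) in
/-- The symmetric algebra of `V^J`, in the coordinates of the chosen basis of `V`. -/
abbrev Poly (V : FGModuleCat.{u} K) : Type max u v := MvPolynomial (J × Coord V) K

variable {K} {U V W : FGModuleCat.{u} K}

/-- The inclusion of the `j`-th copy of `V` as the linear forms in the `j`-th set of variables. -/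
def lin (j : J) : V →ₗ[K] Poly K J V :=
  (Module.Free.chooseBasis K V).constr K fun i => X (j, i)

@[simp]
lemma lin_chooseBasis (j : J) (i : Coord V) :
    lin j (Module.Free.chooseBasis K V i) = (X (j, i) : Poly K J V) :=
  Module.Basis.constr_basis _ K _ i

lemma lin_apply (j : J) (v : V) :
    lin j v = ∑ i, C ((Module.Free.chooseBasis K V).repr v i) * (X (j, i) : Poly K J V) := by
  rw [lin, Module.Basis.constr_apply_fintype]
  simp only [smul_eq_C_mul, Module.Basis.equivFun_apply]

section Lift

variable {B : Type*} [CommRing B] [Algebra K B]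

lemma poly_algHom_ext {φ ψ : Poly K J V →ₐ[K] B} (h : ∀ j v, φ (lin j v) = ψ (lin j v)) : φ = ψ :=
  MvPolynomial.algHom_ext fun ⟨j, i⟩ => by
    rw [← lin_chooseBasis, h]

/-- The algebra homomorphism given by linear maps on the copies of `V`. -/
def polyLift (g : J → V →ₗ[K] B) : Poly K J V →ₐ[K] B :=
  aeval fun x => g x.1 (Module.Free.chooseBasis K V x.2)

@[simp]
lemma polyLift_lin (g : J → V →ₗ[K] B) (j : J) (v : V) : polyLift g (lin j v) = g j v := by
  have h : (polyLift g).toLinearMap ∘ₗ lin j = g j :=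
    (Module.Free.chooseBasis K V).ext fun i => by
      simp [polyLift]
  exact congrArg (· v) h

end Lift

/-- The action of a linear map on polynomials. -/
def polyMap (f : V ⟶ W) : Poly K J V →ₐ[K] Poly K J W :=
  polyLift fun j => lin j ∘ₗ f.hom.hom

@[simp]
lemma polyMap_lin (f : V ⟶ W) (j : J) (v : V) : polyMap f (lin j v) = lin j (f v) :=
  polyLift_lin _ j v

lemma polyMap_X (f : V ⟶ W) (j : J) (i : Coord V) :
    polyMap f (X (j, i)) = lin j (f (Module.Free.chooseBasis K V i)) := by
  rw [← lin_chooseBasis, polyMap_lin]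

lemma polyMap_id : polyMap (𝟙 V) = AlgHom.id K (Poly K J V) :=
  poly_algHom_ext fun j v => by simp

lemma polyMap_comp (f : U ⟶ V) (g : V ⟶ W) :
    polyMap (J := J) (f ≫ g) = (polyMap g).comp (polyMap f) :=
  poly_algHom_ext fun j v => by simp

variable (K J) in
/-- The functor `V ↦ Sym(V^J)`. -/
abbrev polyFunctor : FGModuleCat.{u} K ⥤ ModuleCat.{max u v} K where
  obj V := ModuleCat.of K (Poly K J V)
  map f := ModuleCat.ofHom (polyMap f).toLinearMap
  map_id V := by rw [polyMap_id]; rfl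
  map_comp f g := by rw [polyMap_comp]; rfl

end Polynomial

section Homogeneous

open MvPolynomial

variable {K : Type v} [Field K] {J J' : Type} {M : Type*} [AddCommMonoid M]
  {V W : FGModuleCat.{u} K}

/-- Weighted homogeneity for a weight that depends only on the copy of `V` a variable comes from. -/
abbrev IsHomog (w : J → M) (c : M) (p : Poly K J V) : Prop :=
  p.IsWeightedHomogeneous (fun x => w x.1) c

lemma isHomog_lin (w : J → M) (j : J) (v : V) : IsHomog w (w j) (lin j v : Poly K J V) := by
  rw [lin_apply]
  refine (weightedHomogeneousSubmodule K (fun x : J × Coord V => w x.1) (w j)).sum_mem fun i _ => ?_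
  rw [← smul_eq_C_mul]
  exact Submodule.smul_mem _ _ (isWeightedHomogeneous_X K _ (j, i))

variable (K) in
/-- The subfunctor of polynomials that are homogeneous of weight `c`. -/
def homog (w : J → M) (c : M) : ModuleSubfunctor (polyFunctor.{u} K J) where
  carrier V := weightedHomogeneousSubmodule K (fun x : J × Coord V => w x.1) c
  map_mem _ _ hp := isWeightedHomogeneous_aeval (fun x => isHomog_lin w x.1 _) hp

variable (K) in
/-- The symmetric power `S^n`. -/
abbrev sym (n : ℕ) : FGModuleCat.{u} K ⥤ ModuleCat.{max u v} K :=
  (homog K (fun _ : Unit => 1) n).toFunctor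

lemma IsHomog.polyLift {V' : FGModuleCat.{u} K} {w : J → M} {w' : J' → M} {c : M} {p : Poly K J V}
    (hp : IsHomog w c p) {g : J → V →ₗ[K] Poly K J' V'} (hg : ∀ j v, IsHomog w' (w j) (g j v)) :
    IsHomog w' c (polyLift g p) :=
  isWeightedHomogeneous_aeval (fun _ => hg _ _) hp

/-- The natural algebra homomorphism given by natural linear maps on the copies of `V`. -/
def polySubst (g : ∀ V : FGModuleCat.{u} K, J → V →ₗ[K] Poly K J' V)
    (hg : ∀ {V W : FGModuleCat.{u} K} (f : V ⟶ W) j v, polyMap f (g V j v) = g W j (f v)) :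
    polyFunctor.{u} K J ⟶ polyFunctor.{u} K J' where
  app V := ModuleCat.ofHom (polyLift (g V)).toLinearMap
  naturality {V W} f := by
    have h : (polyLift (g W)).comp (polyMap f) = (polyMap f).comp (polyLift (g V)) :=
      poly_algHom_ext fun j v => by simp [hg]
    exact congrArg (fun φ => ModuleCat.ofHom φ.toLinearMap) h

section Single

variable (j : J)

variable (K V) in
/-- The embedding of the polynomials on `V` into those on `V^J` by the `j`-th copy. -/
abbrev polySingle : Poly K Unit V →ₐ[K] Poly K J V := polyLift fun _ => lin j

lemma isHomog_polySingle {w : J → M} {c : M} {p : Poly K Unit V}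
    (hp : IsHomog (fun _ => w j) c p) : IsHomog w c (polySingle K V j p) :=
  hp.polyLift fun _ => isHomog_lin w j

variable [DecidableEq J]

variable (K V) in
/-- The restriction of polynomials on `V^J` to the `j`-th copy of `V`. -/
abbrev polyProj : Poly K J V →ₐ[K] Poly K Unit V := polyLift fun j' => if j' = j then lin () else 0

lemma polyProj_polySingle (p : Poly K Unit V) : polyProj K V j (polySingle K V j p) = p := by
  have h : (polyProj K V j).comp (polySingle K V j) = AlgHom.id K _ :=
    poly_algHom_ext fun _ v => by simp
  exact congrArg (fun φ => φ p) h

lemma polySingle_polyProj {p : Poly K J V} (hp : ∀ x ∈ p.vars, x.1 = j) :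
    polySingle K V j (polyProj K V j p) = p := by
  refine hom_congr_vars (f₁ := ((polySingle K V j).comp (polyProj K V j)).toRingHom)
    (f₂ := RingHom.id _) ?_ (fun x hx _ => ?_) rfl
  · ext
    simp
  · have h : x = (j, x.2) := Prod.ext (hp x hx) rfl
    change polySingle K V j (polyProj K V j (X x)) = X x
    rw [h, ← lin_chooseBasis, polyLift_lin, if_pos rfl, polyLift_lin]

lemma isHomog_polyProj {w : J → M} {c : M} {p : Poly K J V} (hp : IsHomog w c p) :
    IsHomog (fun _ => w j) c (polyProj K V j p) :=
  hp.polyLift fun j' v => by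
    split_ifs with hj
    · exact hj ▸ isHomog_lin _ () v
    · exact isWeightedHomogeneous_zero K _ _

lemma isHomog_const_iff {w : M} (hw : Function.Injective fun n : ℕ => n • w) {n : ℕ}
    {p : Poly K Unit V} : IsHomog (fun _ => w) (n • w) p ↔ IsHomog (fun _ => 1) n p := by
  have h := isWeightedHomogeneous_comp_iff (w := fun _ : Unit × Coord V => 1) (c := n) (p := p)
    (φ := multiplesHom M w) hw
  simpa only [Function.comp_def, multiplesHom_apply, one_nsmul] using h

/-- If the variables of the `j`-th copy of `V` are the only ones that can occur in weight `c`, then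
the polynomials that are homogeneous of weight `c` form a symmetric power. -/
def symIso [PartialOrder M] [IsOrderedAddMonoid M] [CanonicallyOrderedAdd M] {w : J → M} {n : ℕ}
    {c : M} (hc : n • w j = c) (hw : Function.Injective fun n : ℕ => n • w j)
    (h : ∀ j', w j' ≤ c → j' = j) : sym.{u} K n ≅ (homog.{u} K w c).toFunctor :=
  (homog K _ n).restrictIso (homog K w c) (polySubst (fun _ _ => lin j) (by simp))
    (polySubst (fun _ j' => if j' = j then lin () else 0) (by intros; split_ifs <;> simp))
    (fun _ p hp => ⟨isHomog_polySingle j (hc ▸ (isHomog_const_iff hw).2 hp),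
      polyProj_polySingle j p⟩)
    (fun _ p hp => ⟨(isHomog_const_iff hw).1 (hc ▸ isHomog_polyProj j hp),
      polySingle_polyProj j fun _ hx => h _ (le_of_mem_vars_of_isWeightedHomogeneous hp hx)⟩)

end Single

end Homogeneous

section Bihomogeneous

open MvPolynomial

variable {K : Type v} [Field K]

/-- The bidegree of the variables of `Sym(V ⊕ V) = Sym(V) ⊗ Sym(V)`: those of the first factor are
indexed by `true`, those of the second by `false`. -/
abbrev bideg (j : Bool) : ℕ × ℕ := bif j then (1, 0) else (0, 1)

variable (K) in
/-- The tensor product `S^a ⊗ S^b` of symmetric powers. -/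
abbrev symTensor (a b : ℕ) : FGModuleCat.{u} K ⥤ ModuleCat.{max u v} K :=
  (homog K bideg (a, b)).toFunctor

variable (K) in
/-- `S^n ≅ S^n ⊗ S^0`. -/
def symIsoLeft (n : ℕ) : sym.{u} K n ≅ symTensor.{u} K n 0 :=
  symIso true (w := bideg) (by simp) (fun a b h => by simpa using h) (by simp)

variable (K) in
/-- `S^n ≅ S^0 ⊗ S^n`. -/
def symIsoRight (n : ℕ) : sym.{u} K n ≅ symTensor.{u} K 0 n :=
  symIso false (w := bideg) (by simp) (fun a b h => by simpa using h) (by simp)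

variable {V : FGModuleCat.{u} K}

variable (V) in
/-- The algebra homomorphism `Sym((V ⊕ V)^2) → Sym(V^2)` induced by the first projection on one
copy of `V ⊕ V` and by the second projection on the other. -/
def codiag : Poly K Bool (V ⊞ V) →ₐ[K] Poly K Bool V :=
  polyLift fun j => lin j ∘ₗ (bif j then biprod.fst else biprod.snd : V ⊞ V ⟶ V).hom.hom

lemma codiag_lin (j : Bool) (x : (V ⊞ V : FGModuleCat K)) :
    codiag V (lin j x) = lin j ((bif j then biprod.fst else biprod.snd : V ⊞ V ⟶ V) x) :=
  polyLift_lin _ j x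

lemma isHomog_codiag {c : ℕ × ℕ} {p : Poly K Bool (V ⊞ V)} (hp : IsHomog bideg c p) :
    IsHomog bideg c (codiag V p) :=
  hp.polyLift fun j _ => isHomog_lin bideg j _

lemma codiag_polyMap_diag (p : Poly K Bool V) :
    codiag V (polyMap (biprod.lift (𝟙 V) (𝟙 V)) p) = p := by
  have h : (codiag V).comp (polyMap (biprod.lift (𝟙 V) (𝟙 V))) = AlgHom.id K _ :=
    poly_algHom_ext fun j v => by
      cases j <;> simp [codiag_lin, ← ConcreteCategory.comp_apply]
  exact congrArg (fun φ => φ p) h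

lemma codiag_polyMap_eq_zero (N : AddSubmonoid (ℕ × ℕ)) {c : ℕ × ℕ} (hc : c ∉ N) {f : V ⟶ V ⊞ V}
    (hf : ∀ j, bideg j ∉ N → f ≫ (bif j then biprod.fst else biprod.snd) = 0) {p : Poly K Bool V}
    (hp : IsHomog bideg c p) : codiag V (polyMap f p) = 0 :=
  algHom_eq_zero_of_isWeightedHomogeneous N (φ := (codiag V).comp (polyMap f)) (fun x hx => by
    rw [AlgHom.comp_apply, polyMap_X, codiag_lin, ← ConcreteCategory.comp_apply, hf x.1 hx]
    exact map_zero _) hp hc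

variable (K) in
/-- `codiag` as a natural transformation. -/
def codiagTrans : double (FGModuleCat.{u} K) ⋙ polyFunctor K Bool ⟶ polyFunctor K Bool where
  app V := ModuleCat.ofHom (codiag V).toLinearMap
  naturality {V W} f := by
    have h : (codiag W).comp (polyMap (biprod.map f f)) = (polyMap f).comp (codiag V) :=
      poly_algHom_ext fun j x => by
        have hj : biprod.map f f ≫ (bif j then biprod.fst else biprod.snd) =
            (bif j then biprod.fst else biprod.snd) ≫ f := by cases j <;> simp
        rw [AlgHom.comp_apply, AlgHom.comp_apply, polyMap_lin, codiag_lin, codiag_lin, polyMap_lin,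
          ← ConcreteCategory.comp_apply, hj, ConcreteCategory.comp_apply]
    exact congrArg (fun φ => ModuleCat.ofHom φ.toLinearMap) h

variable (K) in
/-- The natural transformation from `S^a(V ⊕ V) ⊗ S^b(V ⊕ V)` to `S^a(V) ⊗ S^b(V)` that retracts the
cross effect. -/
def symTensorCodiag (a b : ℕ) : double (FGModuleCat.{u} K) ⋙ symTensor K a b ⟶ symTensor K a b :=
  let N : ModuleSubfunctor (double (FGModuleCat.{u} K) ⋙ polyFunctor K Bool) :=
    { carrier V := (homog K bideg (a, b)).carrier (V ⊞ V)
      map_mem f := (homog K bideg (a, b)).map_mem (biprod.map f f) }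
  N.restrict (homog K bideg (a, b)) (codiagTrans K) fun _ _ hp => isHomog_codiag hp

lemma crossDiag_comp_symTensorCodiag {a b : ℕ} (ha : a ≠ 0) (hb : b ≠ 0) :
    crossDiag (symTensor.{u} K a b) ≫ symTensorCodiag K a b = 𝟙 _ := by
  ext1
  funext V
  have hdiag : (symTensor K a b).map (biprod.lift (𝟙 V) (𝟙 V)) ≫ (symTensorCodiag K a b).app V =
      𝟙 _ := by
    ext p
    exact Subtype.ext (codiag_polyMap_diag p.1)
  have hzero (N : AddSubmonoid (ℕ × ℕ)) (hN : (a, b) ∉ N) (f : V ⟶ V ⊞ V)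
      (hf : ∀ j, bideg j ∉ N → f ≫ (bif j then biprod.fst else biprod.snd) = 0) :
      (symTensor K a b).map f ≫ (symTensorCodiag K a b).app V = 0 := by
    ext p
    exact Subtype.ext (codiag_polyMap_eq_zero N hN hf p.2)
  have hinl := hzero (AddMonoidHom.mker (AddMonoidHom.snd ℕ ℕ)) hb biprod.inl
    (by simp [AddSubmonoid.mem_prod])
  have hinr := hzero (AddMonoidHom.mker (AddMonoidHom.fst ℕ ℕ)) ha biprod.inr
    (by simp [AddSubmonoid.mem_prod])
  have h0 := hzero (AddMonoidHom.mker (AddMonoidHom.fst ℕ ℕ)) ha 0 (by simp)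
  rw [NatTrans.comp_app, crossDiag_app, Preadditive.add_comp, Preadditive.sub_comp,
    Preadditive.sub_comp, hdiag, hinl, hinr, h0, sub_zero, sub_zero, add_zero, NatTrans.id_app]

lemma subsingleton_ext_symTensor [HasExt.{w} (FGModuleCat.{u} K ⥤ ModuleCat.{max u v} K)]
    (A : FGModuleCat.{u} K ⥤ ModuleCat.{max u v} K) [A.Additive] {a b : ℕ} (ha : a ≠ 0) (hb : b ≠ 0)
    (n : ℕ) : Subsingleton (Ext A (symTensor K a b) n) :=
  subsingleton_ext_of_crossDiag_comp A _ (crossDiag_comp_symTensorCodiag ha hb) n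

end Bihomogeneous

section DivX

open MvPolynomial

variable {R σ : Type*} [CommSemiring R] {u v : σ} {p : MvPolynomial σ R}

/-- Division by the variable `X v`, discarding the monomials that it does not divide. -/
def divX (v : σ) : MvPolynomial σ R →+ MvPolynomial σ R where
  toFun p := p.divMonomial (Finsupp.single v 1)
  map_zero' := zero_divMonomial _
  map_add' p q := add_divMonomial p q _

lemma coeff_divX (v : σ) (p : MvPolynomial σ R) (m : σ →₀ ℕ) :
    coeff m (divX v p) = coeff (Finsupp.single v 1 + m) p :=
  coeff_divMonomial _ _ _

lemma divX_X_mul_self (v : σ) (p : MvPolynomial σ R) : divX v (X v * p) = p :=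
  X_mul_divMonomial v p

lemma divX_X_mul_of_ne (h : u ≠ v) (p : MvPolynomial σ R) :
    divX v (X u * p) = X u * divX v p := by
  classical
  ext m
  have hu : u ∈ (Finsupp.single v 1 + m).support ↔ u ∈ m.support := by simp [h.symm]
  have hm (hu : u ∈ m.support) : Finsupp.single v 1 + m - Finsupp.single u 1 =
      Finsupp.single v 1 + (m - Finsupp.single u 1) :=
    add_tsub_assoc_of_le (by simpa [Nat.one_le_iff_ne_zero] using hu) _
  simp only [coeff_divX, coeff_X_mul', hu]
  split_ifs with hu'
  · rw [hm hu']
  · rfl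

lemma divX_comm (u v : σ) (p : MvPolynomial σ R) : divX u (divX v p) = divX v (divX u p) := by
  ext m
  simp only [coeff_divX, add_left_comm]

lemma divX_pderiv (h : u ≠ v) (p : MvPolynomial σ R) :
    divX v (pderiv u p) = pderiv u (divX v p) := by
  ext m
  simp [coeff_divX, coeff_pderiv, h.symm, add_assoc]

lemma divX_eq_zero_of_notMem_vars (h : v ∉ p.vars) : divX v p = 0 := by
  ext m
  rw [coeff_divX, coeff_zero]
  by_contra hm
  exact h ((mem_vars_iff_mem_support v).2 ⟨_, mem_support_iff.2 hm, by simp⟩)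

lemma coeff_eq_zero_of_divX_eq_zero (h : divX v p = 0) {m : σ →₀ ℕ} (hm : m v ≠ 0) :
    coeff m p = 0 := by
  rw [← add_tsub_cancel_of_le (Finsupp.single_le_iff.2 (Nat.one_le_iff_ne_zero.2 hm)),
    ← coeff_divX, h, coeff_zero]

lemma isWeightedHomogeneous_divX {M : Type*} [AddCancelCommMonoid M] {w : σ → M} {c c' : M}
    (hp : p.IsWeightedHomogeneous w c) (h : w v + c' = c) :
    (divX v p).IsWeightedHomogeneous w c' := by
  intro m hm
  rw [coeff_divX] at hm
  have := hp hm
  rw [map_add, Finsupp.weight_single, one_smul, ← h] at this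
  exact add_left_cancel this

end DivX

section Derivation

open MvPolynomial

variable {R σ : Type*} [CommRing R]

lemma algHom_comp_derivation {B : Type*} [CommRing B] [Algebra R B] (φ : MvPolynomial σ R →ₐ[R] B)
    {δ : Derivation R (MvPolynomial σ R) (MvPolynomial σ R)} {δ' : Derivation R B B}
    (h : ∀ v, φ (δ (X v)) = δ' (φ (X v))) (p : MvPolynomial σ R) : φ (δ p) = δ' (φ p) := by
  induction p using MvPolynomial.induction_on with
  | C a => simp [← algebraMap_eq]
  | add p q hp hq => simp only [map_add, hp, hq]
  | mul_X p v hp => simp only [Derivation.leibniz, smul_eq_mul, map_add, map_mul, hp, h]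

lemma pderiv_comm (u v : σ) (p : MvPolynomial σ R) :
    pderiv u (pderiv v p) = pderiv v (pderiv u p) := by
  ext m
  by_cases h : u = v
  · rw [h]
  · simp only [coeff_pderiv, Finsupp.add_apply, Finsupp.single_eq_of_ne h,
      Finsupp.single_eq_of_ne (Ne.symm h), add_right_comm m, add_zero]
    ring

variable [CharP R 2]

lemma derivation_derivation_eq_zero {δ : Derivation R (MvPolynomial σ R) (MvPolynomial σ R)}
    (h : ∀ v, δ (δ (X v)) = 0) (p : MvPolynomial σ R) : δ (δ p) = 0 := by
  induction p using MvPolynomial.induction_on with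
  | C a => simp [← algebraMap_eq]
  | add p q hp hq => rw [map_add, map_add, hp, hq, add_zero]
  | mul_X p v hp =>
    simp only [Derivation.leibniz, smul_eq_mul, map_add, hp, h]
    linear_combination CharTwo.add_self_eq_zero (δ p * δ (X v))

lemma pderiv_pderiv_self (v : σ) (p : MvPolynomial σ R) : pderiv v (pderiv v p) = 0 := by
  classical
  refine derivation_derivation_eq_zero (fun u => ?_) p
  rw [pderiv_X]
  by_cases h : v = u <;> simp [h]

end Derivation

section Koszul

open MvPolynomial

variable {R ι : Type*} [CommRing R] {p : MvPolynomial (Bool × ι) R}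

/-- The projection onto the monomials in which `yᵢ` does not occur and the exponent of `xᵢ` is
even. -/
def koszulProj (i : ι) (p : MvPolynomial (Bool × ι) R) : MvPolynomial (Bool × ι) R :=
  pderiv (true, i) (X (true, i) * p) -
    X (false, i) * divX (false, i) (pderiv (true, i) (X (true, i) * p))

/-- The homotopy that maps `xᵢ ^ a * yᵢ ^ (b + 1)` to `xᵢ ^ (a + 1) * yᵢ ^ b` for even `a`, and the
other powers to zero. -/
def koszulHomotopy (i : ι) (p : MvPolynomial (Bool × ι) R) : MvPolynomial (Bool × ι) R :=
  divX (false, i) (X (true, i) * pderiv (true, i) (X (true, i) * p))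

lemma divX_koszulProj_self (i : ι) (p : MvPolynomial (Bool × ι) R) :
    divX (false, i) (koszulProj i p) = 0 := by
  rw [koszulProj, map_sub, divX_X_mul_self, sub_self]

lemma divX_koszulProj (i : ι) {j : ι} (hp : divX (false, j) p = 0) :
    divX (false, j) (koszulProj i p) = 0 := by
  by_cases h : j = i
  · rw [h, divX_koszulProj_self]
  · rw [koszulProj, map_sub, divX_X_mul_of_ne (by simpa using Ne.symm h), divX_comm,
      divX_pderiv (by simp), divX_X_mul_of_ne (by simp), hp]
    simp

lemma isWeightedHomogeneous_koszulHomotopy {a b : ℕ} (i : ι)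
    (hp : p.IsWeightedHomogeneous (fun x => bideg x.1) (a, b + 1)) :
    (koszulHomotopy i p).IsWeightedHomogeneous (fun x => bideg x.1) (a + 1, b) := by
  have hX := isWeightedHomogeneous_X R (fun x : Bool × ι => bideg x.1) (true, i)
  have h := hX.mul ((hX.mul hp).pderiv (n' := (a, b + 1)) (i := (true, i)) (by simp [add_comm]))
  exact isWeightedHomogeneous_divX h (by simp [add_comm])

lemma eq_zero_of_divX_eq_zero {a b : ℕ}
    (hp : p.IsWeightedHomogeneous (fun x => bideg x.1) (a, b + 1))
    (h : ∀ i, divX (false, i) p = 0) : p = 0 := by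
  ext m
  by_contra hm
  have hsnd (x : Bool × ι) : (m x • bideg x.1).2 = 0 := by
    obtain ⟨_ | _, i⟩ := x
    · have hfalse : m (false, i) = 0 :=
        by_contra fun hi => hm (coeff_eq_zero_of_divX_eq_zero (h i) hi)
      rw [hfalse, zero_nsmul, Prod.snd_zero]
    · exact mul_zero _
  have hweight := congrArg Prod.snd (hp hm)
  rw [Finsupp.weight_apply, Finsupp.sum, Prod.snd_sum,
    Finset.sum_eq_zero fun x _ => hsnd x] at hweight
  exact absurd hweight b.succ_ne_zero.symm

variable [Fintype ι]

/-- The Koszul differential `∑ i, yᵢ ∂/∂xᵢ`, where `xᵢ = X (true, i)` and `yᵢ = X (false, i)`. -/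
def koszul : Derivation R (MvPolynomial (Bool × ι) R) (MvPolynomial (Bool × ι) R) :=
  ∑ i, (X (false, i) : MvPolynomial (Bool × ι) R) • pderiv (true, i)

lemma koszul_apply (p : MvPolynomial (Bool × ι) R) :
    koszul p = ∑ i, X (false, i) * pderiv (true, i) p := by
  have h := map_sum (Derivation.coeFnAddMonoidHom (R := R) (A := MvPolynomial (Bool × ι) R)
    (M := MvPolynomial (Bool × ι) R))
    (fun i => (X (false, i) : MvPolynomial (Bool × ι) R) • pderiv (true, i)) Finset.univ
  exact (congrFun h p).trans (Finset.sum_apply _ _ _)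

@[simp]
lemma koszul_X_true (i : ι) :
    koszul (X (true, i)) = (X (false, i) : MvPolynomial (Bool × ι) R) := by
  classical
  simp [koszul_apply, pderiv_X, Pi.single_apply]

@[simp]
lemma koszul_X_false (i : ι) : koszul (X (false, i)) = (0 : MvPolynomial (Bool × ι) R) := by
  classical
  simp [koszul_apply, pderiv_X]

lemma divX_koszul (i : ι) (p : MvPolynomial (Bool × ι) R) :
    divX (false, i) (koszul p) = koszul (divX (false, i) p) + pderiv (true, i) p
      - X (false, i) * divX (false, i) (pderiv (true, i) p) := by
  classical
  simp only [koszul_apply, map_sum]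
  rw [← Finset.add_sum_erase _ _ (Finset.mem_univ i),
    ← Finset.add_sum_erase (a := i) _ _ (Finset.mem_univ i), divX_X_mul_self,
    divX_pderiv (by simp), Finset.sum_congr rfl fun j hj => ?_]
  · ring
  · rw [divX_X_mul_of_ne (by simpa using Finset.ne_of_mem_erase hj), divX_pderiv (by simp)]

lemma pderiv_true_koszul (i : ι) (p : MvPolynomial (Bool × ι) R) :
    pderiv (true, i) (koszul p) = koszul (pderiv (true, i) p) := by
  simp only [koszul_apply, map_sum]
  refine Finset.sum_congr rfl fun j _ => ?_
  rw [pderiv_mul, pderiv_X_of_ne (by simp), zero_mul, zero_add, pderiv_comm]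

lemma isWeightedHomogeneous_koszul {a b : ℕ}
    (hp : p.IsWeightedHomogeneous (fun x => bideg x.1) (a + 1, b)) :
    (koszul p).IsWeightedHomogeneous (fun x => bideg x.1) (a, b + 1) := by
  rw [koszul_apply]
  refine (weightedHomogeneousSubmodule R _ _).sum_mem fun i _ => ?_
  have h := (isWeightedHomogeneous_X R (fun x : Bool × ι => bideg x.1) (false, i)).mul
    (hp.pderiv (n' := (a, b)) (i := (true, i)) (by simp))
  simpa [add_comm] using h

lemma koszul_eq_zero_of_isWeightedHomogeneous {b : ℕ}
    (hp : p.IsWeightedHomogeneous (fun x => bideg x.1) (0, b)) : koszul p = 0 := by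
  rw [koszul_apply]
  refine Finset.sum_eq_zero fun i _ => ?_
  rw [pderiv_eq_zero_of_notMem_vars, mul_zero]
  exact fun hi => by simpa using le_of_mem_vars_of_isWeightedHomogeneous hp hi

variable [CharP R 2]

lemma koszul_koszul (p : MvPolynomial (Bool × ι) R) : koszul (koszul p) = 0 :=
  derivation_derivation_eq_zero (fun ⟨j, i⟩ => by cases j <;> simp) p

lemma koszul_koszulHomotopy (i : ι) (p : MvPolynomial (Bool × ι) R) :
    koszul (koszulHomotopy i p) + koszulHomotopy i (koszul p) = p + koszulProj i p := by
  set e := pderiv (true, i) (X (true, i) * p) with he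
  have he_eq : e = p + X (true, i) * pderiv (true, i) p := by
    rw [he, pderiv_mul, pderiv_X_self, one_mul]
  have he_idem : pderiv (true, i) (X (true, i) * e) = e := by
    rw [pderiv_mul, pderiv_X_self, he, pderiv_pderiv_self, one_mul, mul_zero, add_zero]
  have h_koszul_mul (q : MvPolynomial (Bool × ι) R) :
      koszul (X (true, i) * q) = X (true, i) * koszul q + X (false, i) * q := by
    rw [Derivation.leibniz, koszul_X_true, smul_eq_mul, smul_eq_mul, mul_comm q]
  have h_koszul_e : koszul e = pderiv (true, i) (X (true, i) * koszul p) +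
      X (false, i) * pderiv (true, i) p := by
    rw [he, ← pderiv_true_koszul, h_koszul_mul, map_add, pderiv_mul (f := X (false, i)),
      pderiv_X_of_ne (by simp), zero_mul, zero_add]
  have h_comm : X (true, i) * pderiv (true, i) (X (true, i) * koszul p) =
      koszul (X (true, i) * e) + X (false, i) * p := by
    rw [h_koszul_mul]
    linear_combination (-X (true, i)) * h_koszul_e + X (false, i) * he_eq -
      X (false, i) * CharTwo.add_self_eq_zero e
  have h_div : koszulHomotopy i (koszul p) =
      koszul (koszulHomotopy i p) + e - X (false, i) * divX (false, i) e + p := by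
    rw [koszulHomotopy, h_comm, map_add, divX_X_mul_self, divX_koszul, he_idem, koszulHomotopy]
  rw [h_div, koszulProj]
  linear_combination CharTwo.add_self_eq_zero (koszul (koszulHomotopy i p))

lemma exists_divX_add_koszul_eq_zero {a b : ℕ}
    (hp : p.IsWeightedHomogeneous (fun x => bideg x.1) (a, b + 1)) (hp0 : koszul p = 0)
    (s : Finset ι) : ∃ q : MvPolynomial (Bool × ι) R,
      q.IsWeightedHomogeneous (fun x => bideg x.1) (a + 1, b) ∧
        ∀ i ∈ s, divX (false, i) (p + koszul q) = 0 := by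
  classical
  induction s using Finset.induction_on with
  | empty => exact ⟨0, isWeightedHomogeneous_zero _ _ _, by simp⟩
  | insert i s _ ih =>
    obtain ⟨q, hq, hqs⟩ := ih
    have h : p + koszul (q + koszulHomotopy i (p + koszul q)) = koszulProj i (p + koszul q) := by
      have h0 : koszulHomotopy i (koszul (p + koszul q)) = 0 := by
        rw [map_add, hp0, koszul_koszul]
        simp [koszulHomotopy]
      rw [map_add]
      linear_combination koszul_koszulHomotopy i (p + koszul q) - h0 +
        CharTwo.add_self_eq_zero (p + koszul q)
    refine ⟨_, hq.add (isWeightedHomogeneous_koszulHomotopy i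
      (hp.add (isWeightedHomogeneous_koszul hq))), fun j hj => ?_⟩
    rw [h]
    obtain rfl | hj := Finset.mem_insert.1 hj
    · exact divX_koszulProj_self j _
    · exact divX_koszulProj i (hqs j hj)

lemma exists_koszul_eq {a b : ℕ} (hp : p.IsWeightedHomogeneous (fun x => bideg x.1) (a, b + 1))
    (hp0 : koszul p = 0) : ∃ q : MvPolynomial (Bool × ι) R,
      q.IsWeightedHomogeneous (fun x => bideg x.1) (a + 1, b) ∧ koszul q = p := by
  obtain ⟨q, hq, h⟩ := exists_divX_add_koszul_eq_zero hp hp0 Finset.univ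
  have h0 := eq_zero_of_divX_eq_zero (hp.add (isWeightedHomogeneous_koszul hq)) fun i =>
    h i (Finset.mem_univ i)
  exact ⟨q, hq, (CharTwo.add_eq_zero.1 h0).symm⟩

end Koszul

section ShortExact

variable {𝒞 : Type*} [Category* 𝒞] {K : Type v} [Ring K] {P Q R : 𝒞 ⥤ ModuleCat.{w} K}
  {N : ModuleSubfunctor P} {N' : ModuleSubfunctor Q} {N'' : ModuleSubfunctor R}

lemma ModuleSubfunctor.shortExact_restrict {φ : P ⟶ Q} {ψ : Q ⟶ R}
    {hφ : ∀ V, ∀ x ∈ N.carrier V, φ.app V x ∈ N'.carrier V}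
    {hψ : ∀ V, ∀ x ∈ N'.carrier V, ψ.app V x ∈ N''.carrier V}
    (w : N.restrict N' φ hφ ≫ N'.restrict N'' ψ hψ = 0)
    (hinj : ∀ V, Function.Injective (φ.app V))
    (hsurj : ∀ V, ∀ z ∈ N''.carrier V, ∃ y ∈ N'.carrier V, ψ.app V y = z)
    (hexact : ∀ V, ∀ y ∈ N'.carrier V, ψ.app V y = 0 → ∃ x ∈ N.carrier V, φ.app V x = y) :
    (ShortComplex.mk _ _ w).ShortExact := by
  refine shortExact_of_exact_app w (fun V x x' h => ?_) (fun V z => ?_) fun V y h => ?_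
  · exact Subtype.ext (hinj V (congrArg (fun y : N'.carrier V => y.1) h))
  · obtain ⟨y, hy, hyz⟩ := hsurj V z.1 z.2
    exact ⟨⟨y, hy⟩, Subtype.ext hyz⟩
  · obtain ⟨x, hx, hxy⟩ := hexact V y.1 y.2 (congrArg (fun z : N''.carrier V => z.1) h)
    exact ⟨⟨x, hx⟩, Subtype.ext hxy⟩

end ShortExact

section Expand

open MvPolynomial

variable {R σ : Type*} [CommSemiring R] {n : ℕ} {p : MvPolynomial σ R}

lemma exists_expand_eq (h : ∀ m ∈ p.support, ∀ i, n ∣ m i) : ∃ r, expand n r = p := by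
  suffices p ∈ (expand n : MvPolynomial σ R →ₐ[R] _).range from this
  rw [p.as_sum]
  refine Subalgebra.sum_mem _ fun m hm =>
    ⟨monomial (m.mapRange (· / n) (Nat.zero_div n)) (coeff m p), ?_⟩
  refine (expand_monomial n _ _).trans ?_
  congr 2
  ext i
  simpa using Nat.mul_div_cancel' (h m hm i)

lemma isWeightedHomogeneous_of_expand {M : Type*} [AddCommMonoid M] {w : σ → M} {c : M}
    (hn : n ≠ 0) (hinj : Function.Injective fun c : M => n • c)
    (hp : (expand n p).IsWeightedHomogeneous w (n • c)) : p.IsWeightedHomogeneous w c := by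
  intro m hm
  rw [← coeff_expand_smul n hn] at hm
  exact hinj ((map_nsmul _ _ _).symm.trans (hp hm))

lemma dvd_of_pderiv_eq_zero [NoZeroDivisors R] [CharP R n] {i : σ}
    (h : pderiv i p = 0) {m : σ →₀ ℕ} (hm : m ∈ p.support) : n ∣ m i := by
  by_cases hmi : m i = 0
  · exact hmi ▸ dvd_zero n
  rw [← CharP.cast_eq_zero_iff R]
  obtain ⟨m', rfl⟩ : ∃ m', m = m' + Finsupp.single i 1 :=
    ⟨_, (tsub_add_cancel_of_le (Finsupp.single_le_iff.2 (Nat.one_le_iff_ne_zero.2 hmi))).symm⟩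
  have h0 := congrArg (coeff m') h
  rw [coeff_pderiv, coeff_zero] at h0
  simpa using (mul_eq_zero.1 h0).resolve_left (mem_support_iff.1 hm)

lemma exists_pow_eq_of_pderiv_eq_zero {ℓ : ℕ} [Fact ℓ.Prime] {p : MvPolynomial σ (ZMod ℓ)}
    (h : ∀ i, pderiv i p = 0) : ∃ r, r ^ ℓ = p := by
  obtain ⟨r, hr⟩ := exists_expand_eq fun m hm i => dvd_of_pderiv_eq_zero (h i) hm
  exact ⟨r, by rw [← expand_zmod, hr]⟩

end Expand

section Cocycles

open MvPolynomial

variable {K : Type v} [Field K]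

lemma koszul_lin_true {V : FGModuleCat.{u} K} (v : V) :
    koszul (lin true v) = (lin false v : Poly K Bool V) := by
  have h : koszul.toLinearMap ∘ₗ lin true = (lin false : V →ₗ[K] Poly K Bool V) :=
    (Module.Free.chooseBasis K V).ext fun i => by simp
  exact congrArg (· v) h

lemma koszul_lin_false {V : FGModuleCat.{u} K} (v : V) :
    koszul (lin false v) = (0 : Poly K Bool V) := by
  have h : koszul.toLinearMap ∘ₗ lin false = (0 : V →ₗ[K] Poly K Bool V) :=
    (Module.Free.chooseBasis K V).ext fun i => by simp
  exact congrArg (· v) h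

lemma polyMap_koszul {V W : FGModuleCat.{u} K} (f : V ⟶ W) (p : Poly K Bool V) :
    polyMap f (koszul p) = koszul (polyMap f p) :=
  algHom_comp_derivation _ (fun ⟨j, i⟩ => by
    cases j <;> simp [polyMap_X, koszul_lin_true, koszul_lin_false]) p

variable (K) in
/-- The Koszul differential as a natural transformation. -/
def koszulTrans : polyFunctor.{u} K Bool ⟶ polyFunctor.{u} K Bool where
  app _ := ModuleCat.ofHom koszul.toLinearMap
  naturality _ _ f := ModuleCat.hom_ext (LinearMap.ext fun p => (polyMap_koszul f p).symm)

variable (K) in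
/-- The Koszul cocycles in `S^a ⊗ S^b`. -/
def cocycles (a b : ℕ) : ModuleSubfunctor (polyFunctor.{u} K Bool) where
  carrier V := (homog K bideg (a, b)).carrier V ⊓ LinearMap.ker koszul.toLinearMap
  map_mem f _ hp := ⟨(homog K bideg (a, b)).map_mem f hp.1,
    (polyMap_koszul f _).symm.trans ((congrArg (polyMap f) hp.2).trans (map_zero _))⟩

variable (K) in
/-- `S^n` as the Koszul cocycles in `S^0 ⊗ S^n`. -/
def symIsoCocycles (n : ℕ) : sym.{u} K n ≅ (cocycles.{u} K 0 n).toFunctor :=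
  symIsoRight K n ≪≫ (homog K bideg (0, n)).restrictIso (cocycles K 0 n) (𝟙 _) (𝟙 _)
    (fun _ _ hp => ⟨⟨hp, koszul_eq_zero_of_isWeightedHomogeneous hp⟩, rfl⟩)
    (fun _ _ hp => ⟨hp.1, rfl⟩)

variable [CharP K 2]

variable (K) in
/-- The Koszul differential from `S^(a + 1) ⊗ S^b` to the cocycles in `S^a ⊗ S^(b + 1)`. -/
def koszulToCocycles (a b : ℕ) :
    symTensor.{u} K (a + 1) b ⟶ (cocycles.{u} K a (b + 1)).toFunctor :=
  (homog K bideg (a + 1, b)).restrict (cocycles K a (b + 1)) (koszulTrans K) fun _ p hp =>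
    ⟨isWeightedHomogeneous_koszul hp, koszul_koszul p⟩

variable (K) in
/-- The inclusion of the cocycles into `S^a ⊗ S^b`. -/
def cocyclesι (a b : ℕ) : (cocycles.{u} K a b).toFunctor ⟶ symTensor.{u} K a b :=
  (cocycles K a b).restrict (homog K bideg (a, b)) (𝟙 _) fun _ _ hp => hp.1

lemma cocyclesι_comp_koszulToCocycles (a b : ℕ) :
    cocyclesι K (a + 1) b ≫ koszulToCocycles.{u} K a b = 0 := by
  ext V p
  exact Subtype.ext p.2.2

lemma shortExact_cocycles (a b : ℕ) :
    (ShortComplex.mk _ _ (cocyclesι_comp_koszulToCocycles (K := K) a b)).ShortExact :=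
  ModuleSubfunctor.shortExact_restrict _ (fun _ _ _ h => h)
    (fun _ _ hp => exists_koszul_eq hp.1 hp.2) (fun _ p hp hp0 => ⟨p, ⟨hp, hp0⟩, rfl⟩)

end Cocycles

section ExtCocycles

variable {K : Type v} [Field K] [CharP K 2]
  [HasExt.{w} (FGModuleCat.{u} K ⥤ ModuleCat.{max u v} K)]
  (A : FGModuleCat.{u} K ⥤ ModuleCat.{max u v} K) [A.Additive]

lemma bijective_extδ_cocycles (a : ℕ) {b : ℕ} (hb : b ≠ 0) (i : ℕ) :
    Function.Bijective (extδ A (shortExact_cocycles (K := K) a b) i) := by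
  have h (i : ℕ) : Subsingleton (Ext A (symTensor.{u} K (a + 1) b) i) :=
    subsingleton_ext_symTensor A a.succ_ne_zero hb i
  exact ⟨injective_of_exact_of_subsingleton (exact_extMap_extδ A (shortExact_cocycles a b) i),
    surjective_of_exact_of_subsingleton (exact_extδ_extMap A (shortExact_cocycles a b) i)⟩

lemma subsingleton_ext_cocycles (a : ℕ) {b i : ℕ} (hb : b ≠ 0) (hi : i < a) :
    Subsingleton (Ext A (cocycles.{u} K a b).toFunctor i) := by
  induction a generalizing b i with
  | zero => exact absurd hi i.not_lt_zero
  | succ a ih =>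
    cases i with
    | zero =>
      have := subsingleton_ext_symTensor A a.succ_ne_zero hb 0
      have := (shortExact_cocycles (K := K) a b).mono_f
      exact (extMap_zero_injective A (cocyclesι K (a + 1) b)).subsingleton
    | succ i =>
      have := ih b.succ_ne_zero (Nat.lt_of_succ_lt_succ hi)
      exact (bijective_extδ_cocycles A a hb i).surjective.subsingleton

lemma nonempty_ext_sym_equiv_cocycles (a : ℕ) {b n : ℕ} (hb : b ≠ 0) (h : a + b = n) (i : ℕ) :
    Nonempty (Ext A (sym.{u} K n) i ≃+ Ext A (cocycles.{u} K a b).toFunctor (i + a)) := by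
  induction a generalizing b with
  | zero =>
    obtain rfl := (zero_add b).symm.trans h
    exact ⟨extCongr A (symIsoCocycles K b) i⟩
  | succ a ih =>
    obtain ⟨e⟩ := ih b.succ_ne_zero (by omega)
    exact ⟨e.trans (AddEquiv.ofBijective _ (bijective_extδ_cocycles A a hb (i + a)))⟩

end ExtCocycles

section Frobenius

open MvPolynomial

/-- The `2^j`-th power map as a natural transformation. -/
def frobTrans (J : Type) (j : ℕ) : polyFunctor.{u} (ZMod 2) J ⟶ polyFunctor.{u} (ZMod 2) J where
  app V := ModuleCat.ofHom
    ((iterateFrobenius (Poly (ZMod 2) J V) 2 j).toAddMonoidHom.toZModLinearMap 2)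
  naturality _ _ f := ModuleCat.hom_ext (LinearMap.ext fun p =>
    (map_pow (polyMap f) p (2 ^ j)).symm)

/-- The Frobenius `S^m ⟶ S^n`, `p ↦ p^(2^j)`, for `n = m * 2^j`. -/
def frob {m n j : ℕ} (h : m * 2 ^ j = n) : sym.{u} (ZMod 2) m ⟶ sym.{u} (ZMod 2) n :=
  (homog (ZMod 2) _ m).restrict (homog (ZMod 2) _ n) (frobTrans Unit j) fun _ _ hp => by
    have := hp.pow (2 ^ j)
    rwa [smul_eq_mul, mul_comm, h] at this

lemma frob_comp_frob {l m n j k : ℕ} (hj : l * 2 ^ j = m) (hk : m * 2 ^ k = n)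
    (h : l * 2 ^ (j + k) = n) : frob.{u} hj ≫ frob hk = frob h := by
  ext V p
  exact Subtype.ext ((pow_add 2 j k ▸ pow_mul p.1 (2 ^ j) (2 ^ k)).symm)

lemma frobTrans_app_injective (J : Type) (j : ℕ) (V : FGModuleCat.{u} (ZMod 2)) :
    Function.Injective ((frobTrans J j).app V) :=
  iterateFrobenius_inj (Poly (ZMod 2) J V) 2 j

variable {K : Type v} [Field K] {V : FGModuleCat.{u} K}

lemma polySingle_eq_rename {J : Type} (j : J) :
    polySingle K V j = rename fun x : Unit × Coord V => (j, x.2) :=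
  MvPolynomial.algHom_ext fun ⟨_, i⟩ => by simp [polyLift]

lemma pderiv_eq_zero_of_koszul_polySingle_eq_zero {p : Poly K Unit V}
    (h : koszul (polySingle K V true p) = 0) (x : Unit × Coord V) : pderiv x p = 0 := by
  have hinj : Function.Injective fun x : Unit × Coord V => (true, x.2) :=
    fun x y h => Prod.ext rfl (Prod.ext_iff.1 h).2
  rw [polySingle_eq_rename] at h
  have hdiv : divX (false, x.2) (rename (fun x : Unit × Coord V => (true, x.2)) p) = 0 :=
    divX_eq_zero_of_notMem_vars fun hx => by
      obtain ⟨y, -, hy⟩ := mem_vars_rename _ _ hx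
      simp at hy
  have hkoszul := divX_koszul x.2 (rename (fun x : Unit × Coord V => (true, x.2)) p)
  rw [h, divX_pderiv (by simp), hdiv, map_zero, map_zero, map_zero, mul_zero, sub_zero,
    zero_add, pderiv_rename hinj x] at hkoszul
  exact rename_injective _ hinj (hkoszul.symm.trans (map_zero _).symm)

lemma koszul_polySingle_sq [CharP K 2] (p : Poly K Unit V) :
    koszul (polySingle K V true (p ^ 2)) = 0 := by
  rw [map_pow, Derivation.leibniz_pow, two_smul]
  exact CharTwo.add_self_eq_zero _

lemma isHomog_koszul_polySingle {n : ℕ} {p : Poly K Unit V} (hp : IsHomog (fun _ => 1) n p) :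
    IsHomog bideg (n - 1, 1) (koszul (polySingle K V true p)) := by
  have h : IsHomog bideg (n, 0) (polySingle K V true p) := ((symIsoLeft K n).hom.app V ⟨p, hp⟩).2
  cases n with
  | zero =>
    rw [koszul_eq_zero_of_isWeightedHomogeneous h]
    exact isWeightedHomogeneous_zero K _ _
  | succ n => exact isWeightedHomogeneous_koszul h

lemma exists_koszul_polySingle_eq [CharP K 2] {n : ℕ} (hn : n ≠ 0) {p : Poly K Bool V}
    (hp : IsHomog bideg (n - 1, 1) p) (hp0 : koszul p = 0) :
    ∃ q : Poly K Unit V, IsHomog (fun _ => 1) n q ∧ koszul (polySingle K V true q) = p := by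
  obtain ⟨q, hq, rfl⟩ := exists_koszul_eq hp hp0
  rw [Nat.sub_one_add_one hn] at hq
  refine ⟨_, ((symIsoLeft K n).inv.app V ⟨q, hq⟩).2, congrArg koszul ?_⟩
  have hw : ∀ j, bideg j ≤ (n, 0) → j = true := by simp
  exact polySingle_polyProj true fun _ hx => hw _ (le_of_mem_vars_of_isWeightedHomogeneous hq hx)

/-- The Koszul differential `S^n = S^n ⊗ S^0 ⟶ S^(n - 1) ⊗ S^1`. -/
def symToCocycles (n : ℕ) : sym.{u} (ZMod 2) n ⟶ (cocycles.{u} (ZMod 2) (n - 1) 1).toFunctor :=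
  (homog (ZMod 2) _ n).restrict (cocycles (ZMod 2) (n - 1) 1)
    (polySubst (fun _ _ => lin true) (by simp) ≫ koszulTrans (ZMod 2)) fun _ p hp =>
      ⟨isHomog_koszul_polySingle hp, koszul_koszul _⟩

variable {m n : ℕ}

lemma frob_comp_symToCocycles (h : m * 2 ^ 1 = n) : frob.{u} h ≫ symToCocycles n = 0 := by
  ext V p
  exact Subtype.ext (koszul_polySingle_sq p.1)

lemma exists_sq_eq {V : FGModuleCat.{u} (ZMod 2)} {p : Poly (ZMod 2) Unit V}
    (hp : IsHomog (fun _ => 1) (m * 2) p) (hp0 : koszul (polySingle (ZMod 2) V true p) = 0) :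
    ∃ q : Poly (ZMod 2) Unit V, IsHomog (fun _ => 1) m q ∧ q ^ 2 = p := by
  obtain ⟨q, rfl⟩ := exists_pow_eq_of_pderiv_eq_zero
    (pderiv_eq_zero_of_koszul_polySingle_eq_zero hp0)
  rw [← expand_zmod, mul_comm, ← smul_eq_mul] at hp
  exact ⟨q, isWeightedHomogeneous_of_expand two_ne_zero
    (fun _ _ h => mul_left_cancel₀ two_ne_zero h) hp, rfl⟩

lemma shortExact_frob (h : m * 2 ^ 1 = n) (hn : n ≠ 0) :
    (ShortComplex.mk _ _ (frob_comp_symToCocycles.{u} h)).ShortExact :=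
  ModuleSubfunctor.shortExact_restrict _ (frobTrans_app_injective Unit 1)
    (fun _ _ hp => exists_koszul_polySingle_eq hn hp.1 hp.2)
    (fun _ _ hp hp0 => exists_sq_eq (h.symm ▸ hp) hp0)

end Frobenius

section DigitSum

lemma digits_sum_add_le (p : ℕ) [Fact p.Prime] (a b : ℕ) :
    (p.digits (a + b)).sum ≤ (p.digits a).sum + (p.digits b).sum := by
  have hv : padicValNat p a.factorial + padicValNat p b.factorial ≤
      padicValNat p (a + b).factorial := by
    rw [← padicValNat.mul a.factorial_ne_zero b.factorial_ne_zero]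
    exact (padicValNat_dvd_iff_le (Nat.factorial_ne_zero _)).1
      (pow_padicValNat_dvd.trans (Nat.factorial_mul_factorial_dvd_factorial_add a b))
  have h := Nat.mul_le_mul_left (p - 1) hv
  simp only [mul_add, sub_one_mul_padicValNat_factorial] at h
  have ha := Nat.digit_sum_le p a
  have hb := Nat.digit_sum_le p b
  have hab := Nat.digit_sum_le p (a + b)
  omega

lemma digits_sum_two_pow_sub_one (c : ℕ) : (Nat.digits 2 (2 ^ c - 1)).sum = c := by
  induction c with
  | zero => rfl
  | succ c ih =>
    have h : 2 ^ (c + 1) - 1 = 1 + 2 * (2 ^ c - 1) := by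
      have := Nat.one_le_two_pow (n := c)
      omega
    rw [h, Nat.digits_add 2 one_lt_two 1 _ one_lt_two (.inl one_ne_zero), List.sum_cons, ih,
      add_comm]

end DigitSum

section LeadingForm

open MvPolynomial

variable (R : Type*) [CommRing R] (σ : Type*)

variable {R σ} in
lemma homogeneousComponent_mul_of_totalDegree_le {a b : MvPolynomial σ R} {c e : ℕ}
    (ha : a.totalDegree ≤ c) (hb : b.totalDegree ≤ e) :
    homogeneousComponent (c + e) (a * b) =
      homogeneousComponent c a * homogeneousComponent e b := by
  classical
  ext m
  rw [coeff_homogeneousComponent, coeff_mul, coeff_mul, ← Finset.sum_const_zero,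
    ← Finset.sum_ite_irrel]
  refine Finset.sum_congr rfl fun ⟨x, y⟩ hxy => ?_
  have hm : x.degree + y.degree = m.degree := by
    rw [← map_add, Finset.HasAntidiagonal.mem_antidiagonal.1 hxy]
  have hx : c < x.degree → coeff x a = 0 := fun h =>
    coeff_eq_zero_of_totalDegree_lt (ha.trans_lt h)
  have hy : e < y.degree → coeff y b = 0 := fun h =>
    coeff_eq_zero_of_totalDegree_lt (hb.trans_lt h)
  simp only [coeff_homogeneousComponent]
  grind

/-- The pairs consisting of a polynomial of degree at most `n * Q` and its homogeneous component of
degree `n * Q`. They are graded by `n` and multiplicative, so that leading forms can be computed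
with `aeval`. -/
def leadingForms (Q n : ℕ) : Submodule R (MvPolynomial σ R × MvPolynomial σ R) :=
  (homogeneousComponent (n * Q)).graph ⊓ (restrictTotalDegree σ R (n * Q)).prod ⊤

variable {R σ} in
lemma mem_leadingForms {Q n : ℕ} {x : MvPolynomial σ R × MvPolynomial σ R} :
    x ∈ leadingForms R σ Q n ↔
      homogeneousComponent (n * Q) x.1 = x.2 ∧ x.1.totalDegree ≤ n * Q := by
  simp [leadingForms, mem_restrictTotalDegree, eq_comm]

instance (Q : ℕ) : SetLike.GradedMonoid (leadingForms R σ Q) where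
  one_mem := mem_leadingForms.2 (by simp)
  mul_mem c e x y hx hy := by
    rw [mem_leadingForms] at hx hy ⊢
    rw [add_mul, Prod.fst_mul, Prod.snd_mul]
    exact ⟨by rw [homogeneousComponent_mul_of_totalDegree_le hx.2 hy.2, hx.1, hy.1],
      (totalDegree_mul _ _).trans (add_le_add hx.2 hy.2)⟩

end LeadingForm

section AdditivePolynomial

open MvPolynomial

variable (p r k : ℕ) [Fact p.Prime]

/-- The additive polynomial `x + x^q + ⋯ + x^(q^k)` for `q = p^r`, as an additive endomorphism of
a ring of characteristic `p`. -/
def additivePoly (B : Type*) [CommRing B] [CharP B p] : B →+ B :=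
  ∑ a ∈ Finset.range (k + 1), (iterateFrobenius B p (r * a)).toAddMonoidHom

variable {B : Type*} [CommRing B] [CharP B p]

lemma additivePoly_apply (x : B) :
    additivePoly p r k B x = ∑ a ∈ Finset.range (k + 1), x ^ p ^ (r * a) := by
  rw [additivePoly, AddMonoidHom.finsetSum_apply]
  rfl

lemma additivePoly_pow_sub (x : B) :
    additivePoly p r k B x ^ p ^ r - additivePoly p r k B x = x ^ p ^ (r * (k + 1)) - x := by
  have h : additivePoly p r k B x ^ p ^ r =
      ∑ a ∈ Finset.range (k + 1), x ^ p ^ (r * (a + 1)) := by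
    rw [additivePoly_apply, sum_pow_char_pow]
    simp only [← pow_mul, ← pow_add, mul_add_one]
  rw [h, additivePoly_apply, ← Finset.sum_sub_distrib,
    Finset.sum_range_sub fun a => x ^ p ^ (r * a), mul_zero, pow_zero, pow_one]

lemma map_additivePoly {B' : Type*} [CommRing B'] [CharP B' p] (φ : B →+* B') (x : B) :
    φ (additivePoly p r k B x) = additivePoly p r k B' (φ x) := by
  simp only [additivePoly_apply, map_sum, map_pow]

variable (R : Type*) [CommRing R] [CharP R p] {σ : Type*}

/-- The substitution of the additive polynomial for each variable. -/
def additiveSubst : MvPolynomial σ R →ₐ[R] MvPolynomial σ R :=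
  aeval fun i => additivePoly p r k _ (X i)

variable {R}

lemma additiveSubst_X (i : σ) :
    additiveSubst p r k R (X i) = additivePoly p r k (MvPolynomial σ R) (X i) :=
  aeval_X _ i

lemma map_additiveSubst {S : Type*} [CommRing S] [CharP S p] (φ : R →+* S) (f : MvPolynomial σ R) :
    map φ (additiveSubst p r k R f) = additiveSubst p r k S (map φ f) := by
  have h : (map φ).comp (additiveSubst p r k R (σ := σ)).toRingHom =
      (additiveSubst p r k S).toRingHom.comp (map φ) := by
    ext i
    · simp
    · simp [additiveSubst_X, map_additivePoly]
  exact DFunLike.congr_fun h f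

variable (σ R) in
/-- Polynomials whose monomials have degrees with base-`p` digit sum at most `t`. -/
abbrev digitSumLE (t : ℕ) : Submodule R (MvPolynomial σ R) :=
  restrictSupport R {m | (p.digits m.degree).sum ≤ t}

instance : SetLike.GradedMonoid (digitSumLE p R σ) where
  one_mem := by
    rw [← C_1, ← monomial_zero', monomial_mem_restrictSupport]
    simp
  mul_mem s t f g hf hg := by
    have h := Submodule.mul_mem_mul hf hg
    rw [← restrictSupport_add] at h
    refine restrictSupport_mono R ?_ h
    rintro _ ⟨m, hm, n, hn, rfl⟩
    rw [Set.mem_ofPred_eq, map_add]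
    exact (digits_sum_add_le p _ _).trans (add_le_add hm hn)

lemma additiveSubst_mem_digitSumLE {d : ℕ} {f : MvPolynomial σ R} (hf : f.totalDegree ≤ d) :
    additiveSubst p r k R f ∈ digitSumLE p R σ d := by
  have hX (i : σ) : additivePoly p r k (MvPolynomial σ R) (X i) ∈ digitSumLE p R σ 1 := by
    rw [additivePoly_apply]
    refine Submodule.sum_mem _ fun a _ => ?_
    rw [X_pow_eq_monomial, monomial_mem_restrictSupport, Set.mem_ofPred_eq, Finsupp.degree_single,
      ← mul_one (p ^ (r * a)), Nat.digits_base_pow_mul (Fact.out : p.Prime).one_lt one_pos]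
    simp [Nat.digits_of_lt p 1 one_ne_zero (Fact.out : p.Prime).one_lt]
  rw [← sum_homogeneousComponent f, map_sum]
  refine Submodule.sum_mem _ fun c hc => restrictSupport_mono R ?_
    (aeval_mem_of_isWeightedHomogeneous (digitSumLE p R σ) hX
      (homogeneousComponent_isHomogeneous c f))
  exact fun m hm => hm.trans ((Finset.mem_range_succ_iff.1 hc).trans hf)

lemma homogeneousComponent_additiveSubst_mul {d N : ℕ} (hN : N < p ^ (r * (k + 1)))
    (hd : d < (p.digits (N - 1)).sum) {f : MvPolynomial σ R} (hf : f.totalDegree ≤ d) (i : σ) :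
    homogeneousComponent N (additiveSubst p r k R (f * (X i ^ p ^ r - X i))) = 0 := by
  classical
  ext m
  rw [coeff_homogeneousComponent, coeff_zero, ite_eq_right_iff]
  intro hm
  have hXi : additiveSubst p r k R (X i ^ p ^ r - X i) =
      (X i ^ p ^ (r * (k + 1)) - X i : MvPolynomial σ R) := by
    rw [map_sub, map_pow, additiveSubst_X, additivePoly_pow_sub]
  have hlt : ¬ Finsupp.single i (p ^ (r * (k + 1))) ≤ m := fun h => by
    have := (Finsupp.single_le_iff.1 h).trans (Finsupp.le_degree i m)
    omega
  rw [map_mul, hXi, mul_sub, coeff_sub, X_pow_eq_monomial, coeff_mul_monomial', if_neg hlt,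
    coeff_mul_X', zero_sub, neg_eq_zero, ite_eq_right_iff]
  intro him
  have hdeg : (m - Finsupp.single i 1).degree = N - 1 := by
    rw [← hm, ← Finsupp.sub_add_single_one_cancel (Finsupp.mem_support_iff.1 him)]
    simp
  by_contra hne
  have := (mem_restrictSupport_iff R).1 (additiveSubst_mem_digitSumLE p r k hf)
    (mem_support_iff.2 hne)
  rw [Set.mem_ofPred_eq, hdeg] at this
  omega

lemma prod_univ_X_sub_C {κ : Type*} [Field κ] [Fintype κ] (i : σ) :
    ∏ s : κ, (X i - C s : MvPolynomial σ κ) = X i ^ Fintype.card κ - X i := by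
  have h := Polynomial.prod_multiset_X_sub_C_of_monic_of_roots_card_eq
    (p := (Polynomial.X ^ Fintype.card κ - Polynomial.X : Polynomial κ))
    (Polynomial.monic_X_pow_sub (by
      rw [Polynomial.degree_X]
      exact_mod_cast Fintype.one_lt_card))
    (by
      rw [FiniteField.roots_X_pow_card_sub_X,
        FiniteField.X_pow_card_sub_X_natDegree_eq κ Fintype.one_lt_card]
      rfl)
  rw [FiniteField.roots_X_pow_card_sub_X] at h
  have h' := congrArg (Polynomial.aeval (X i : MvPolynomial σ κ)) h
  rw [← Finset.prod_eq_multiset_prod, map_prod] at h'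
  simpa only [map_sub, map_pow, Polynomial.aeval_X, Polynomial.aeval_C, algebraMap_eq] using h'

lemma homogeneousComponent_additiveSubst_eq_zero {κ : Type*} [Field κ] [Fintype κ] [CharP κ p]
    [Finite σ] (hκ : Fintype.card κ = p ^ r) {d N : ℕ} (hN : N < p ^ (r * (k + 1)))
    (hd : d < (p.digits (N - 1)).sum) {f : MvPolynomial σ κ} (hf : f.totalDegree ≤ d)
    (h0 : ∀ x, eval x f = 0) : homogeneousComponent N (additiveSubst p r k κ f) = 0 := by
  obtain ⟨g, hg, hfg⟩ := combinatorial_nullstellensatz_exists_linearCombination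
    (fun _ : σ => (Finset.univ : Finset κ)) (fun _ => ⟨0, Finset.mem_univ _⟩) f (fun x _ => h0 x)
  simp only [prod_univ_X_sub_C, hκ] at hg hfg
  rw [hfg, Finsupp.linearCombination_apply, Finsupp.sum, map_sum, map_sum]
  refine Finset.sum_eq_zero fun i hi => homogeneousComponent_additiveSubst_mul p r k hN hd ?_ i
  have hne : (X i ^ p ^ r - X i : MvPolynomial σ κ) ≠ 0 := by
    rw [← hκ, ← prod_univ_X_sub_C]
    refine Finset.prod_ne_zero_iff.2 fun s _ h => one_ne_zero (α := ℕ) ?_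
    rw [← totalDegree_X (R := κ) i, sub_eq_zero.1 h, totalDegree_C]
  have := hg i
  rw [totalDegree_mul_of_isDomain hne (Finsupp.mem_support_iff.1 hi)] at this
  omega

lemma mk_additivePoly_X_mem_leadingForms (hr : r ≠ 0) (i : σ) :
    (additivePoly p r k (MvPolynomial σ R) (X i), X i ^ p ^ (r * k)) ∈
      leadingForms R σ (p ^ (r * k)) 1 := by
  have h1 : 1 < p := (Fact.out : p.Prime).one_lt
  have hlt {a : ℕ} (ha : a ∈ Finset.range k) : p ^ (r * a) < p ^ (r * k) :=
    Nat.pow_lt_pow_right h1 (Nat.mul_lt_mul_of_pos_left (Finset.mem_range.1 ha) hr.bot_lt)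
  have hdeg (n : ℕ) : (X i ^ n : MvPolynomial σ R).totalDegree ≤ n :=
    (isHomogeneous_X_pow i n).totalDegree_le
  rw [mem_leadingForms, one_mul, additivePoly_apply, Finset.sum_range_succ, map_add,
    homogeneousComponent_eq_self (isHomogeneous_X_pow i _), map_sum]
  constructor
  · rw [Finset.sum_eq_zero, zero_add]
    exact fun a ha => homogeneousComponent_eq_zero _ _ ((hdeg _).trans_lt (hlt ha))
  · refine (totalDegree_add _ _).trans (max_le ?_ (hdeg _))
    exact totalDegree_finsetSum_le fun a ha => (hdeg _).trans (hlt ha).le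

lemma homogeneousComponent_additiveSubst (hr : r ≠ 0) {c : ℕ} {f : MvPolynomial σ R}
    (hf : f.IsHomogeneous c) :
    homogeneousComponent (c * p ^ (r * k)) (additiveSubst p r k R f) =
      expand (p ^ (r * k)) f := by
  let F : MvPolynomial σ R →ₐ[R] MvPolynomial σ R × MvPolynomial σ R :=
    aeval fun i => (additivePoly p r k _ (X i), X i ^ p ^ (r * k))
  have h₁ : (AlgHom.fst R _ _).comp F = additiveSubst p r k R := by
    ext i
    simp [F, additiveSubst_X]
  have h₂ : (AlgHom.snd R _ _).comp F = expand (p ^ (r * k)) := by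
    ext i
    simp [F]
  rw [← h₁, ← h₂]
  exact (mem_leadingForms.1 (aeval_mem_of_isWeightedHomogeneous (leadingForms R σ _)
    (mk_additivePoly_X_mem_leadingForms p r k hr) hf)).1

lemma expand_pow_zmod (n : ℕ) (f : MvPolynomial σ (ZMod p)) : expand (p ^ n) f = f ^ p ^ n := by
  induction n with
  | zero => rw [pow_zero, expand_one_apply, pow_one]
  | succ n ih => rw [pow_succ, expand_mul, expand_zmod, map_pow, ih, pow_mul]

end AdditivePolynomial

section GaloisSeparating

open MvPolynomial

lemma finrank_restrictDegree_card_sub_one (K : Type*) (L σ : Type u) [Field K] [Field L] [Fintype L]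
    [Finite σ] : Module.finrank K (restrictDegree σ K (Fintype.card L - 1)) = Nat.card (σ → L) := by
  classical
  have := Fintype.ofFinite σ
  rw [Nat.card_eq_fintype_card, ← finrank_R σ L]
  exact (Module.finrank_eq_nat_card_basis (basisRestrictSupport K _)).trans
    (Module.finrank_eq_nat_card_basis (basisRestrictSupport L _)).symm

variable {K : Type v} {L : Type u} {M : Type*} [Field K] [Field L] [Algebra K L] [AddCommGroup M]
  [Module K M]

/-- A linear map on a field extension that, together with its Galois conjugates, separates
points. Such a map detects the vanishing on `L^n` of polynomials with coefficients in `K`. -/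
def GaloisSeparating (l : L →ₗ[K] M) : Prop :=
  ∀ v, (∀ τ : Gal(L/K), l (τ v) = 0) → v = 0

lemma galoisSeparating_normalBasis_coord_one [FiniteDimensional K L] [IsGalois K L] :
    GaloisSeparating ((IsGalois.normalBasis K L).coord 1) := fun v hv => by
  let b := IsGalois.normalBasis K L
  refine b.ext_elem fun τ => ?_
  have h : b.coord 1 ∘ₗ (τ⁻¹ : Gal(L/K)).toLinearMap = b.coord τ := b.ext fun τ' => by
    have hb : τ⁻¹ (b τ') = b (τ⁻¹ * τ') := by
      rw [IsGalois.normalBasis_apply τ', IsGalois.normalBasis_apply (τ⁻¹ * τ'), AlgEquiv.mul_apply]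
    change b.coord 1 (τ⁻¹ (b τ')) = b.coord τ (b τ')
    classical
    rw [hb, b.coord_apply, b.coord_apply, b.repr_self, b.repr_self]
    simp only [Finsupp.single_apply, inv_mul_eq_one, eq_comm]
  rw [map_zero, Finsupp.zero_apply, ← b.coord_apply, ← h]
  exact hv τ⁻¹

variable {l : L →ₗ[K] M} {σ : Type u} {f : MvPolynomial σ K}

lemma GaloisSeparating.eval_map_eq_zero (hl : GaloisSeparating l)
    (h : ∀ y : σ → L, l (aeval y f) = 0) (y : σ → L) : eval y (map (algebraMap K L) f) = 0 := by
  rw [MvPolynomial.eval_map, ← aeval_def]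
  refine hl _ fun τ => ?_
  rw [← h (τ ∘ y)]
  exact congrArg l (comp_aeval_apply y τ.toAlgHom f)

variable [Finite σ] [Fintype L]

lemma GaloisSeparating.eq_zero_of_mem_restrictDegree (hl : GaloisSeparating l)
    (hf : f ∈ restrictDegree σ K (Fintype.card L - 1)) (h : ∀ y : σ → L, l (aeval y f) = 0) :
    f = 0 := by
  refine map_injective _ (algebraMap K L).injective ((map_zero (map (algebraMap K L))).symm ▸ ?_)
  refine eq_zero_of_eval_eq_zero σ L _ (hl.eval_map_eq_zero h) ?_
  rw [mem_restrictDegree] at hf ⊢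
  exact fun m hm => hf m (support_map_subset _ _ hm)

lemma GaloisSeparating.exists_aeval_eq (hl : GaloisSeparating l) (hM : Module.finrank K M = 1)
    (φ : (σ → L) → M) :
    ∃ f ∈ restrictDegree σ K (Fintype.card L - 1), ∀ y, l (aeval y f) = φ y := by
  have := Module.finite_of_finrank_eq_succ hM
  let Φ : restrictDegree σ K (Fintype.card L - 1) →ₗ[K] (σ → L) → M :=
    LinearMap.pi fun y => l ∘ₗ (aeval y).toLinearMap ∘ₗ Submodule.subtype _
  have hΦ : Function.Injective Φ := (injective_iff_map_eq_zero Φ).2 fun f hf =>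
    Subtype.ext (hl.eq_zero_of_mem_restrictDegree f.2 (congrFun hf))
  have := FiniteDimensional.of_injective Φ hΦ
  have hrank : Module.finrank K (restrictDegree σ K (Fintype.card L - 1)) =
      Module.finrank K ((σ → L) → M) := by
    have := Fintype.ofFinite (σ → L)
    rw [finrank_restrictDegree_card_sub_one, Module.finrank_pi_fintype, hM, Finset.sum_const,
      smul_eq_mul, mul_one, Finset.card_univ, Nat.card_eq_fintype_card]
  obtain ⟨f, hf⟩ := (LinearMap.injective_iff_surjective_of_finrank_eq_finrank hrank).1 hΦ φ
  exact ⟨f, f.2, congrFun hf⟩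

end GaloisSeparating

section PolynomialFunctor

open MvPolynomial

section HomogeneousComponent

variable {K : Type v} [Field K] {V W : FGModuleCat.{u} K}

lemma isHomogeneous_polyMap (f : V ⟶ W) {n : ℕ} {p : Poly K Unit V} (hp : p.IsHomogeneous n) :
    (polyMap f p).IsHomogeneous n :=
  (homog K (fun _ : Unit => 1) n).map_mem f hp

lemma homogeneousComponent_polyMap (f : V ⟶ W) (n : ℕ) (p : Poly K Unit V) :
    homogeneousComponent n (polyMap f p) = polyMap f (homogeneousComponent n p) := by
  have h (j : ℕ) : homogeneousComponent n (polyMap f (homogeneousComponent j p)) =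
      if n = j then polyMap f (homogeneousComponent j p) else 0 :=
    homogeneousComponent_of_mem (isHomogeneous_polyMap f (homogeneousComponent_isHomogeneous j p))
  conv_lhs => rw [← sum_homogeneousComponent p]
  simp only [map_sum, h, Finset.sum_ite_eq, Finset.mem_range]
  split_ifs with hn
  · rfl
  · rw [homogeneousComponent_eq_zero _ _ (by omega), map_zero]

variable (K) in
/-- The subfunctor `S^0 ⊕ ⋯ ⊕ S^d` of polynomials of degree at most `d`. -/
def boundedDegree (d : ℕ) : ModuleSubfunctor (polyFunctor.{u} K Unit) where
  carrier V := restrictTotalDegree (Unit × Coord V) K d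
  map_mem f p hp := by
    rw [mem_restrictTotalDegree] at hp
    change polyMap f p ∈ _
    rw [← sum_homogeneousComponent p, map_sum]
    refine Submodule.sum_mem _ fun i hi => (mem_restrictTotalDegree _ _ _).2 ?_
    have hi' := isHomogeneous_polyMap f (homogeneousComponent_isHomogeneous i p)
    exact hi'.totalDegree_le.trans ((Nat.lt_succ_iff.1 (Finset.mem_range.1 hi)).trans hp)

end HomogeneousComponent

variable (r k : ℕ) {V W : FGModuleCat.{u} (ZMod 2)}

lemma additiveSubst_lin (v : V) :
    additiveSubst 2 r k (ZMod 2) (lin () v) =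
      additivePoly 2 r k (Poly (ZMod 2) Unit V) (lin () v) := by
  have h : (additiveSubst 2 r k (ZMod 2)).toLinearMap ∘ₗ lin () =
      (additivePoly 2 r k (Poly (ZMod 2) Unit V)).toZModLinearMap 2 ∘ₗ lin () :=
    (Module.Free.chooseBasis (ZMod 2) V).ext fun i => by
      simp [additiveSubst_X]
  exact congrArg (fun φ => φ v) h

lemma polyMap_additiveSubst (f : V ⟶ W) (p : Poly (ZMod 2) Unit V) :
    additiveSubst 2 r k (ZMod 2) (polyMap f p) = polyMap f (additiveSubst 2 r k (ZMod 2) p) := by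
  have h : (additiveSubst 2 r k (ZMod 2)).comp (polyMap f) =
      (polyMap f).comp (additiveSubst 2 r k (ZMod 2)) :=
    poly_algHom_ext fun () v => by
      simp only [AlgHom.comp_apply, polyMap_lin, additiveSubst_lin]
      rw [← polyMap_lin]
      exact (map_additivePoly 2 r k (polyMap f).toRingHom (lin () v)).symm
  exact congrArg (fun φ => φ p) h

/-- The natural transformation `p ↦ [p(L)]_n`, where `[-]_n` is the component of degree `n` and
`p(L)` is the result of substituting the additive polynomial `L = additivePoly 2 r k` into `p`. -/
def additiveSubstComponent (n : ℕ) :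
    polyFunctor.{u} (ZMod 2) Unit ⟶ polyFunctor.{u} (ZMod 2) Unit where
  app _ := ModuleCat.ofHom
    (homogeneousComponent n ∘ₗ (additiveSubst 2 r k (ZMod 2)).toLinearMap)
  naturality _ _ f := ModuleCat.hom_ext (LinearMap.ext fun p =>
    (congrArg _ (polyMap_additiveSubst r k f p)).trans (homogeneousComponent_polyMap f n _))

/-- The restriction of `additiveSubstComponent` to polynomials of bounded degree. -/
def boundedDegreeToSym (d n : ℕ) :
    (boundedDegree.{u} (ZMod 2) d).toFunctor ⟶ sym.{u} (ZMod 2) n :=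
  (boundedDegree (ZMod 2) d).restrict (homog (ZMod 2) _ n) (additiveSubstComponent r k n)
    fun _ _ _ => homogeneousComponent_isHomogeneous n (additiveSubst 2 r k (ZMod 2) _)

/-- The inclusion of `S^m` into the functor of polynomials of degree at most `d`. -/
def symToBoundedDegree {m d : ℕ} (h : m ≤ d) :
    sym.{u} (ZMod 2) m ⟶ (boundedDegree.{u} (ZMod 2) d).toFunctor :=
  (homog (ZMod 2) _ m).restrict (boundedDegree (ZMod 2) d) (𝟙 _) fun _ _ hp =>
    (mem_restrictTotalDegree _ _ _).2 ((IsHomogeneous.totalDegree_le hp).trans h)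

variable {r} in
lemma symToBoundedDegree_comp_boundedDegreeToSym {m d n : ℕ} (hr : r ≠ 0) (h : m ≤ d)
    (hn : m * 2 ^ (r * k) = n) :
    symToBoundedDegree.{u} h ≫ boundedDegreeToSym r k d n = frob hn := by
  subst hn
  ext V p
  exact Subtype.ext ((homogeneousComponent_additiveSubst 2 r k hr p.2).trans
    (expand_pow_zmod 2 (r * k) p.1))

end PolynomialFunctor

section Evaluation

open MvPolynomial

variable {K : Type v} {L : Type u} [Field K] [Field L] [Algebra K L]

lemma polyLift_polyMap {V W : FGModuleCat.{u} K} (f : V ⟶ W) (g : W →ₗ[K] L) (p : Poly K Unit V) :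
    polyLift (fun _ => g) (polyMap f p) = polyLift (fun _ => g ∘ₗ f.hom.hom) p := by
  have h : (polyLift fun _ : Unit => g).comp (polyMap f) = polyLift fun _ => g ∘ₗ f.hom.hom :=
    poly_algHom_ext fun j v => by
      rw [AlgHom.comp_apply, polyMap_lin, polyLift_lin, polyLift_lin]
      rfl
  exact congrArg (fun φ => φ p) h

lemma exists_polyLift_eq_aeval {V : FGModuleCat.{u} K} (y : Unit × Coord V → L) :
    ∃ g : V →ₗ[K] L, polyLift (fun _ => g) = aeval y :=
  ⟨(Module.Free.chooseBasis K V).constr K fun i => y ((), i), MvPolynomial.algHom_ext fun x => by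
    simp [polyLift]⟩

variable [Module.Finite K L] {M : ModuleCat.{max u v} K} (l : L →ₗ[K] M) (d : ℕ)

/-- The evaluation of polynomial functions on `V` at the linear maps `V → L`, followed by `l`. Its
target is injective if `M` is. -/
def boundedDegreeEval : (boundedDegree.{u} K d).toFunctor ⟶
    (evaluationRightAdjoint (ModuleCat.{max u v} K) (FGModuleCat.of K L)).obj M :=
  (evaluationAdjunctionLeft (ModuleCat.{max u v} K) (FGModuleCat.of K L)).homEquiv _ _
    (ModuleCat.ofHom (l ∘ₗ (polyLift fun _ => LinearMap.id).toLinearMap ∘ₗ Submodule.subtype _))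

variable {V : FGModuleCat.{u} K}

lemma π_boundedDegreeEval_app (g : V ⟶ FGModuleCat.of K L)
    (x : (boundedDegree.{u} K d).toFunctor.obj V) :
    Pi.π (fun _ : V ⟶ FGModuleCat.of K L => M) g ((boundedDegreeEval l d).app V x) =
      l (polyLift (fun _ => g.hom.hom) x.1) := by
  have h : (boundedDegreeEval l d).app V ≫ Pi.π (fun _ : V ⟶ FGModuleCat.of K L => M) g =
      (boundedDegree K d).toFunctor.map g ≫ ModuleCat.ofHom
        (l ∘ₗ (polyLift fun _ => LinearMap.id).toLinearMap ∘ₗ Submodule.subtype _) := by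
    rw [boundedDegreeEval, evaluationAdjunctionLeft, Adjunction.mkOfHomEquiv_homEquiv]
    exact Pi.lift_π _ g
  exact (congrArg (fun φ => φ x) h).trans (congrArg l (polyLift_polyMap g LinearMap.id x.1))

variable {l d}

lemma eq_zero_of_boundedDegreeEval_app_eq_zero {x : (boundedDegree.{u} K d).toFunctor.obj V}
    (hx : (boundedDegreeEval l d).app V x = 0) (y : Unit × Coord V → L) : l (aeval y x.1) = 0 := by
  obtain ⟨g, hg⟩ := exists_polyLift_eq_aeval y
  rw [← hg]
  refine (π_boundedDegreeEval_app l d (FGModuleCat.ofHom g) x).symm.trans ?_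
  exact (congrArg _ hx).trans (map_zero (Pi.π (fun _ : V ⟶ FGModuleCat.of K L => M) _).hom)

lemma boundedDegreeEval_app_eq {x : (boundedDegree.{u} K d).toFunctor.obj V}
    {z : ↥(∏ᶜ fun _ : V ⟶ FGModuleCat.of K L => M)}
    (h : ∀ g : V ⟶ FGModuleCat.of K L,
      l (polyLift (fun _ => g.hom.hom) x.1) = Pi.π (fun _ : V ⟶ FGModuleCat.of K L => M) g z) :
    (boundedDegreeEval l d).app V x = z :=
  Concrete.limit_ext _ _ _ fun ⟨g⟩ => (π_boundedDegreeEval_app l d g x).trans (h g)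

lemma totalDegree_le_of_mem_restrictDegree {σ R : Type*} [Fintype σ] [CommSemiring R] {n : ℕ}
    {f : MvPolynomial σ R} (hf : f ∈ restrictDegree σ R n) :
    f.totalDegree ≤ Fintype.card σ * n :=
  Finset.sup_le fun m hm => by
    rw [Finsupp.sum_fintype _ _ fun _ => rfl]
    exact Finset.sum_le_card_nsmul _ _ n fun i _ => (mem_restrictDegree _ _ _).1 hf m hm i

variable [Fintype L]

lemma boundedDegreeEval_app_surjective (hl : GaloisSeparating l) (hM : Module.finrank K M = 1)
    (hd : Module.finrank K V * (Fintype.card L - 1) ≤ d) :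
    Function.Surjective ((boundedDegreeEval l d).app V) := fun z => by
  let b := Module.Free.chooseBasis K V
  obtain ⟨f, hf, hfz⟩ := hl.exists_aeval_eq hM fun y : Unit × Coord V → L =>
    Pi.π (fun _ : V ⟶ FGModuleCat.of K L => M)
      (FGModuleCat.ofHom (b.constr K fun i => y ((), i))) z
  have hfd : f.totalDegree ≤ d := (totalDegree_le_of_mem_restrictDegree hf).trans (by
    rwa [Fintype.card_prod, Fintype.card_unit, one_mul, ← Module.finrank_eq_card_basis b])
  refine ⟨⟨f, (mem_restrictTotalDegree _ _ _).2 hfd⟩,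
    boundedDegreeEval_app_eq fun g => ?_⟩
  have hg : FGModuleCat.ofHom (b.constr K fun i => g.hom.hom (b i)) = g :=
    FGModuleCat.hom_ext (b.constr_self K g.hom.hom)
  refine (hfz fun x => g.hom.hom (b x.2)).trans ?_
  rw [hg]

end Evaluation

section FrobeniusVanishing

open MvPolynomial

lemma map_homogeneousComponent {σ R S : Type*} [CommSemiring R] [CommSemiring S] (φ : R →+* S)
    (n : ℕ) (f : MvPolynomial σ R) :
    map φ (homogeneousComponent n f) = homogeneousComponent n (map φ f) := by
  ext m
  simp only [coeff_map, coeff_homogeneousComponent, apply_ite φ, map_zero]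

variable {κ : Type u} [Field κ] [Algebra (ZMod 2) κ] [CharP κ 2] [Fintype κ]
  {M : ModuleCat.{u} (ZMod 2)} {l : κ →ₗ[ZMod 2] M} {r k d n : ℕ}

lemma homogeneousComponent_additiveSubst_zmod_eq_zero {σ : Type u} [Finite σ]
    (hl : GaloisSeparating l) (hκ : Fintype.card κ = 2 ^ r) (hn : n < 2 ^ (r * (k + 1)))
    (hd : d < (Nat.digits 2 (n - 1)).sum) {f : MvPolynomial σ (ZMod 2)} (hf : f.totalDegree ≤ d)
    (h : ∀ y : σ → κ, l (aeval y f) = 0) :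
    homogeneousComponent n (additiveSubst 2 r k (ZMod 2) f) = 0 := by
  have hcomp := homogeneousComponent_additiveSubst_eq_zero 2 r k hκ hn hd
    ((Finset.sup_mono (support_map_subset _ f)).trans hf) (hl.eval_map_eq_zero h)
  rw [← map_additiveSubst, ← map_homogeneousComponent] at hcomp
  exact map_injective _ (algebraMap (ZMod 2) κ).injective (hcomp.trans (map_zero _).symm)

variable [Module.Finite (ZMod 2) κ]

lemma kernel_ι_boundedDegreeEval_comp (hl : GaloisSeparating l) (hκ : Fintype.card κ = 2 ^ r)
    (hn : n < 2 ^ (r * (k + 1))) (hd : d < (Nat.digits 2 (n - 1)).sum) :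
    kernel.ι (boundedDegreeEval l d) ≫ boundedDegreeToSym.{u} r k d n = 0 := by
  ext V x
  have hx : (boundedDegreeEval l d).app V ((kernel.ι (boundedDegreeEval l d)).app V x) = 0 :=
    congrArg (fun φ => φ x) (NatTrans.congr_app (kernel.condition (boundedDegreeEval l d)) V)
  exact Subtype.ext (homogeneousComponent_additiveSubst_zmod_eq_zero hl hκ hn hd
    ((mem_restrictTotalDegree _ _ _).1 ((kernel.ι (boundedDegreeEval l d)).app V x).2)
    (eq_zero_of_boundedDegreeEval_app_eq_zero hx))

variable [HasExt.{w} FunCatF2.{u, u}] (A : FunCatF2.{u, u}) [A.Additive]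

lemma extMap_boundedDegreeToSym_eq_zero (hl : GaloisSeparating l)
    (hM : Module.finrank (ZMod 2) M = 1) (hκ : Fintype.card κ = 2 ^ r)
    (hn : n < 2 ^ (r * (k + 1))) (hd : d < (Nat.digits 2 (n - 1)).sum) {i : ℕ}
    (hi : 2 ^ i * (Fintype.card κ - 1) ≤ d) :
    extMap A (boundedDegreeToSym.{u} r k d n) (i + 1) = 0 := by
  have hzero (V : FGModuleCat.{u} (ZMod 2)) (hV : Module.finrank (ZMod 2) V ≤ 2 ^ i) :
      IsZero ((cokernel (boundedDegreeEval l d)).obj V) := by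
    have hsurj := boundedDegreeEval_app_surjective (V := V) hl hM
      ((Nat.mul_le_mul_right _ hV).trans hi)
    have : Epi (((evaluation _ _).obj V).map (boundedDegreeEval l d)) :=
      (ModuleCat.epi_iff_surjective _).2 hsurj
    exact (isZero_cokernel_of_epi _).of_iso
      (PreservesCokernel.iso ((evaluation _ _).obj V) (boundedDegreeEval l d))
  have := subsingleton_ext_of_isZero_finrank_le A i hzero
  have : Module.Injective (ZMod 2) M := Module.injective_of_isSemisimpleRing _ _
  have : Injective M := Module.injective_object_of_injective_module _ _
  exact extMap_eq_zero_of_kernel_ι_comp A _ (kernel_ι_boundedDegreeEval_comp hl hκ hn hd) i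

lemma exists_extMap_frob_eq_zero (h i : ℕ) :
    ∃ j, extMap A (frob.{u} (pow_add 2 h j).symm) (i + 1) = 0 := by
  let r := h + 1
  let κ := ULift.{u} (GaloisField 2 r)
  let l : κ →ₗ[ZMod 2] ModuleCat.of (ZMod 2) (ULift.{u} (ZMod 2)) :=
    ULift.moduleEquiv.symm.toLinearMap ∘ₗ (IsGalois.normalBasis (ZMod 2) κ).coord 1
  have := Fintype.ofFinite κ
  have hκ : Fintype.card κ = 2 ^ r := by
    rw [Fintype.card_eq_nat_card, Nat.card_ulift, GaloisField.card 2 r h.succ_ne_zero]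
  have := charP_of_injective_algebraMap (algebraMap (ZMod 2) κ).injective 2
  let d := max (2 ^ i * (Fintype.card κ - 1)) (2 ^ h)
  let k := d + 1
  have hl : GaloisSeparating l := fun v hv =>
    galoisSeparating_normalBasis_coord_one v fun τ => congrArg ULift.down (hv τ)
  have hM : Module.finrank (ZMod 2) (ULift.{u} (ZMod 2)) = 1 := by
    rw [finrank_ulift, Module.finrank_self]
  have hn : 2 ^ (h + r * k) < 2 ^ (r * (k + 1)) :=
    Nat.pow_lt_pow_right one_lt_two (by
      rw [mul_add_one, add_comm h]
      exact Nat.add_lt_add_left h.lt_succ_self _)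
  have hd : d < (Nat.digits 2 (2 ^ (h + r * k) - 1)).sum := by
    rw [digits_sum_two_pow_sub_one]
    exact d.lt_succ_self.trans_le ((Nat.le_mul_of_pos_left k h.succ_pos).trans le_add_self)
  refine ⟨r * k, ?_⟩
  rw [← symToBoundedDegree_comp_boundedDegreeToSym k h.succ_ne_zero (le_max_right _ _), extMap_comp,
    extMap_boundedDegreeToSym_eq_zero A hl hM hκ hn hd (le_max_left _ _), AddMonoidHom.zero_comp]

end FrobeniusVanishing

section Identity

open MvPolynomial

lemma lin_injective {K : Type v} [Field K] {V : FGModuleCat.{u} K} :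
    Function.Injective (lin () : V →ₗ[K] Poly K Unit V) := fun v v' h => by
  refine (Module.Free.chooseBasis K V).ext_elem fun i => ?_
  have h' := congrArg (polyLift fun _ => (Module.Free.chooseBasis K V).coord i) h
  rwa [polyLift_lin, polyLift_lin] at h'

lemma exists_lin_eq {K : Type v} [Field K] {V : FGModuleCat.{u} K} {p : Poly K Unit V}
    (hp : IsHomog (fun _ => 1) 1 p) : ∃ v, lin () v = p := by
  change p ∈ homogeneousSubmodule _ K 1 at hp
  rw [homogeneousSubmodule_one_eq_span_X] at hp
  suffices Submodule.span K (Set.range X) ≤ (lin () : V →ₗ[K] Poly K Unit V).range from this hp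
  rw [Submodule.span_le]
  rintro _ ⟨⟨_, i⟩, rfl⟩
  exact ⟨_, lin_chooseBasis _ i⟩

/-- `V` as the space of linear forms in `Sym(V)`. -/
def linEquiv {K : Type v} [Field K] (V : FGModuleCat.{u} K) :
    V ≃ₗ[K] (homog K (fun _ : Unit => 1) 1).carrier V :=
  LinearEquiv.ofBijective ((lin ()).codRestrict _ (isHomog_lin (fun _ : Unit => 1) ()))
    ⟨(LinearMap.injective_codRestrict_iff _).2 lin_injective, fun p => by
      obtain ⟨v, hv⟩ := exists_lin_eq p.2
      exact ⟨v, Subtype.ext hv⟩⟩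

/-- `I ≅ S^1`. -/
def symOneIso : inclFunctor.{u} ≅ sym.{u} (ZMod 2) 1 :=
  NatIso.ofComponents (fun V => (linEquiv V).toModuleIso) fun f =>
    ModuleCat.hom_ext (LinearMap.ext fun v => Subtype.ext (polyMap_lin f () v).symm)

/-- The effect of an endomorphism of `I` on the one-dimensional vector space. -/
def inclEndEval : (inclFunctor.{u} ⟶ inclFunctor.{u}) →+ ULift.{u} (ZMod 2) where
  toFun φ := φ.app (FGModuleCat.of (ZMod 2) (ULift.{u} (ZMod 2))) (ULift.up 1 : ULift (ZMod 2))
  map_zero' := rfl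
  map_add' _ _ := rfl

lemma inclFunctor_hom_app_apply (φ : inclFunctor.{u} ⟶ inclFunctor.{u})
    (V : FGModuleCat.{u} (ZMod 2)) (v : V) :
    φ.app V v = (inclEndEval φ).down • v := by
  let f : FGModuleCat.of (ZMod 2) (ULift.{u} (ZMod 2)) ⟶ V := FGModuleCat.ofHom
    (LinearMap.toSpanSingleton (ZMod 2) V v ∘ₗ ULift.moduleEquiv.toLinearMap)
  have h := congrArg (fun ψ => ψ (ULift.up 1 : ULift (ZMod 2))) (φ.naturality f)
  change φ.app V ((1 : ZMod 2) • v) = _ at h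
  rw [one_smul] at h
  exact h

lemma inclEndEval_bijective : Function.Bijective inclEndEval.{u} := by
  refine ⟨fun φ ψ h => ?_, fun a => ⟨a.down • 𝟙 _, ?_⟩⟩
  · ext V v
    refine (inclFunctor_hom_app_apply φ V v).trans ?_
    rw [h]
    exact (inclFunctor_hom_app_apply ψ V v).symm
  · exact ULift.ext _ _ (mul_one a.down)

/-- `Ext^0(I, I) ≅ 𝔽₂`. -/
def extZeroInclEquiv [HasExt.{w} FunCatF2.{u, u}] :
    Ext inclFunctor.{u} inclFunctor.{u} 0 ≃+ ZMod 2 :=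
  Ext.addEquiv₀.trans ((AddEquiv.ofBijective _ inclEndEval_bijective).trans AddEquiv.ulift)

end Identity

lemma shortExact_frob_two_pow (h : ℕ) :
    (ShortComplex.mk _ _ (frob_comp_symToCocycles.{u} (pow_add 2 h 1).symm)).ShortExact :=
  shortExact_frob (pow_add 2 h 1).symm (by positivity)

section LowDegree

variable [HasExt.{w} FunCatF2.{u, u}] (A : FunCatF2.{u, u})

lemma extMap_frob_injective [A.Additive] {h i : ℕ} (hi : i < 2 ^ (h + 1)) :
    Function.Injective (extMap A (frob.{u} (pow_add 2 h 1).symm) i) := by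
  cases i with
  | zero =>
    have := (shortExact_frob_two_pow h).mono_f
    exact extMap_zero_injective A (frob (pow_add 2 h 1).symm)
  | succ i =>
    have := subsingleton_ext_cocycles (K := ZMod 2) A (2 ^ (h + 1) - 1) one_ne_zero
      (Nat.lt_sub_of_add_lt hi)
    exact injective_of_exact_of_subsingleton (exact_extδ_extMap A (shortExact_frob_two_pow h) i)

lemma extMap_iterate_frob_injective [A.Additive] {h i : ℕ} (hi : i < 2 ^ (h + 1)) (j : ℕ) :
    Function.Injective (extMap A (frob.{u} (pow_add 2 h j).symm) i) := by
  induction j with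
  | zero =>
    have hid : frob.{u} (pow_add 2 h 0).symm = 𝟙 _ := by
      ext V p
      exact Subtype.ext (pow_one p.1)
    rw [hid, extMap_id]
    exact Function.injective_id
  | succ j ih =>
    rw [← frob_comp_frob (pow_add 2 h j).symm (pow_add 2 (h + j) 1).symm, extMap_comp]
    refine (extMap_frob_injective A (hi.trans_le ?_)).comp ih
    exact Nat.pow_le_pow_right two_pos (Nat.add_le_add_right (Nat.le_add_right h j) 1)

lemma subsingleton_ext_sym_two_pow [A.Additive] {h i : ℕ} (h0 : i ≠ 0) (hi : i < 2 ^ (h + 1)) :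
    Subsingleton (Ext A (sym.{u} (ZMod 2) (2 ^ h)) i) := by
  obtain ⟨i, rfl⟩ := Nat.exists_eq_succ_of_ne_zero h0
  obtain ⟨j, hj⟩ := exists_extMap_frob_eq_zero A h i
  refine ⟨fun x y => extMap_iterate_frob_injective A hi j ?_⟩
  rw [hj, AddMonoidHom.zero_apply, AddMonoidHom.zero_apply]

lemma nonempty_ext_zero_sym_equiv [A.Additive] (h : ℕ) :
    Nonempty (Ext A (sym.{u} (ZMod 2) 1) 0 ≃+ Ext A (sym.{u} (ZMod 2) (2 ^ h)) 0) := by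
  induction h with
  | zero => exact ⟨AddEquiv.refl _⟩
  | succ h ih =>
    obtain ⟨e⟩ := ih
    have := subsingleton_ext_cocycles (K := ZMod 2) A (2 ^ (h + 1) - 1) one_ne_zero
      (i := 0) (by have := Nat.one_lt_two_pow h.succ_ne_zero; omega)
    exact ⟨e.trans (AddEquiv.ofBijective _ ⟨extMap_frob_injective A (i := 0) (by positivity),
      surjective_of_exact_of_subsingleton (exact_extMap_extMap A (shortExact_frob_two_pow h) 0)⟩)⟩

end LowDegree

section Computation

lemma not_dvd_add_of_lt {n a b : ℕ} (ha : n ∣ a) (hb : b ≠ 0) (hbn : b < n) : ¬ n ∣ a + b :=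
  fun h => Nat.not_dvd_of_pos_of_lt (Nat.pos_of_ne_zero hb) hbn ((Nat.dvd_add_right ha).1 h)

lemma ne_zero_of_two_pow_succ_eq {h n : ℕ} (hn : 2 ^ (h + 1) = n + 1) : n ≠ 0 := by
  rintro rfl
  exact (Nat.one_lt_two_pow h.succ_ne_zero).ne' hn

lemma two_mul_dvd_or_of_dvd_add {n j : ℕ} (h : n ∣ j + n) : 2 * n ∣ j ∨ 2 * n ∣ j + n := by
  obtain ⟨k, rfl⟩ := (Nat.dvd_add_left (dvd_refl n)).1 h
  obtain ⟨l, rfl | rfl⟩ := k.even_or_odd'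
  · exact .inl ⟨l, by ring⟩
  · exact .inr ⟨l + 1, by ring⟩

variable [HasExt.{w} FunCatF2.{u, u}]

instance : inclFunctor.{u}.Additive where

/-- The value of `Ext^i(I, S^(2^h))`: it is `𝔽₂` if `i` is divisible by `2^(h + 1)`, and zero
otherwise. -/
structure ExtSymEq (h i : ℕ) : Prop where
  nonempty_equiv : 2 ^ (h + 1) ∣ i →
    Nonempty (Ext inclFunctor (sym.{u} (ZMod 2) (2 ^ h)) i ≃+ ZMod 2)
  subsingleton : ¬ 2 ^ (h + 1) ∣ i → Subsingleton (Ext inclFunctor (sym.{u} (ZMod 2) (2 ^ h)) i)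

lemma extSymEq_of_lt {h i : ℕ} (hi : i < 2 ^ (h + 1)) : ExtSymEq.{u, w} h i where
  nonempty_equiv hdvd := by
    obtain rfl := Nat.eq_zero_of_dvd_of_lt hdvd hi
    obtain ⟨e⟩ := nonempty_ext_zero_sym_equiv inclFunctor.{u} h
    exact ⟨e.symm.trans ((extCongr inclFunctor symOneIso 0).symm.trans extZeroInclEquiv)⟩
  subsingleton hdvd :=
    subsingleton_ext_sym_two_pow inclFunctor (fun h0 => hdvd (h0 ▸ dvd_zero _)) hi

/-- The cocycles that form the cokernel of the Frobenius `S^(2^h) ⟶ S^(2^(h + 1))`. -/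
abbrev frobCoker (h : ℕ) : FunCatF2.{u, u} :=
  (cocycles.{u} (ZMod 2) (2 ^ (h + 1) - 1) 1).toFunctor

lemma nonempty_ext_frobCoker_equiv {h n : ℕ} (hn : 2 ^ (h + 1) = n + 1) (j : ℕ) :
    Nonempty (Ext inclFunctor (sym.{u} (ZMod 2) (2 ^ (h + 1))) j ≃+
      Ext inclFunctor (frobCoker.{u} h) (j + n)) := by
  obtain rfl : 2 ^ (h + 1) - 1 = n := by omega
  exact nonempty_ext_sym_equiv_cocycles inclFunctor _ one_ne_zero hn.symm j

section Step

variable {h i j n : ℕ}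

lemma ExtSymEq.subsingleton_sym (hi : ExtSymEq.{u, w} (h + 1) i) (hn : 2 ^ (h + 1) = n + 1)
    (hdvd : ¬ 2 * (n + 1) ∣ i) :
    Subsingleton (Ext inclFunctor (sym.{u} (ZMod 2) (2 ^ (h + 1))) i) :=
  hi.subsingleton (by rwa [pow_succ, hn, mul_comm])

lemma ExtSymEq.subsingleton_frobCoker (hi : ExtSymEq.{u, w} (h + 1) i) (hn : 2 ^ (h + 1) = n + 1)
    (hdvd : ¬ 2 * (n + 1) ∣ i) : Subsingleton (Ext inclFunctor (frobCoker.{u} h) (i + n)) := by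
  obtain ⟨e⟩ := nonempty_ext_frobCoker_equiv hn i
  have := hi.subsingleton_sym hn hdvd
  exact e.symm.subsingleton

lemma nonempty_ext_sym_equiv_of_dvd (hn : 2 ^ (h + 1) = n + 1)
    (ih : ∀ i ≤ j + n + 1, ExtSymEq.{u, w} (h + 1) i) (hj : 2 * (n + 1) ∣ j) :
    Nonempty (Ext inclFunctor (sym.{u} (ZMod 2) (2 ^ h)) (j + n + 1) ≃+ ZMod 2) := by
  have hn0 := ne_zero_of_two_pow_succ_eq hn
  have hS := shortExact_frob_two_pow.{u} h
  have := (ih (j + n) (by omega)).subsingleton_sym hn (not_dvd_add_of_lt hj hn0 (by omega))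
  have := (ih (j + n + 1) le_rfl).subsingleton_sym hn
    (not_dvd_add_of_lt (b := n + 1) hj n.succ_ne_zero (by omega))
  obtain ⟨eC⟩ := nonempty_ext_frobCoker_equiv.{u, w} hn j
  obtain ⟨eH⟩ := (ih j (by omega)).nonempty_equiv (by rwa [pow_succ, hn, mul_comm])
  have hbij : Function.Bijective (extδ inclFunctor hS (j + n)) :=
    ⟨injective_of_exact_of_subsingleton (exact_extMap_extδ inclFunctor hS (j + n)),
      surjective_of_exact_of_subsingleton (exact_extδ_extMap inclFunctor hS (j + n))⟩
  exact ⟨(AddEquiv.ofBijective _ hbij).symm.trans (eC.symm.trans eH)⟩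

lemma nonempty_ext_sym_equiv_of_dvd_add (hn : 2 ^ (h + 1) = n + 1)
    (ih : ∀ i ≤ j + n + 1, ExtSymEq.{u, w} (h + 1) i)
    (hj : 2 * (n + 1) ∣ j + (n + 1)) :
    Nonempty (Ext inclFunctor (sym.{u} (ZMod 2) (2 ^ h)) (j + n + 1) ≃+ ZMod 2) := by
  have hn0 := ne_zero_of_two_pow_succ_eq hn
  have hS := shortExact_frob_two_pow.{u} h
  have := (ih j (by omega)).subsingleton_frobCoker hn
    fun h' => not_dvd_add_of_lt h' n.succ_ne_zero (by omega) hj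
  have : Subsingleton (Ext inclFunctor (frobCoker.{u} h) (j + n + 1)) :=
    add_right_comm j 1 n ▸ (ih (j + 1) (by omega)).subsingleton_frobCoker hn
      fun h' => not_dvd_add_of_lt h' hn0 (by omega) (by rwa [add_assoc, add_comm 1])
  obtain ⟨e⟩ := (ih (j + n + 1) le_rfl).nonempty_equiv (by rwa [pow_succ, hn, mul_comm])
  have hbij : Function.Bijective
      (extMap inclFunctor (frob.{u} (pow_add 2 h 1).symm) (j + n + 1)) :=
    ⟨injective_of_exact_of_subsingleton (exact_extδ_extMap inclFunctor hS (j + n)),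
      surjective_of_exact_of_subsingleton (exact_extMap_extMap inclFunctor hS (j + n + 1))⟩
  exact ⟨(AddEquiv.ofBijective _ hbij).trans e⟩

lemma ExtSymEq.of_succ (hn : 2 ^ (h + 1) = n + 1)
    (ih : ∀ i ≤ j + n + 1, ExtSymEq.{u, w} (h + 1) i) :
    ExtSymEq.{u, w} h (j + n + 1) where
  nonempty_equiv hdvd := by
    rw [hn] at hdvd
    exact (two_mul_dvd_or_of_dvd_add hdvd).elim (nonempty_ext_sym_equiv_of_dvd hn ih)
      (nonempty_ext_sym_equiv_of_dvd_add hn ih)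
  subsingleton hdvd := by
    rw [hn] at hdvd
    have := (ih j (by omega)).subsingleton_frobCoker hn
      fun h' => hdvd (((dvd_mul_left _ _).trans h').add (dvd_refl (n + 1)))
    have := (ih (j + n + 1) le_rfl).subsingleton_sym hn
      fun h' => hdvd ((dvd_mul_left _ _).trans h')
    exact subsingleton_of_exact
      (exact_extδ_extMap inclFunctor (shortExact_frob_two_pow h) (j + n))

end Step

lemma extSymEq (h i : ℕ) : ExtSymEq.{u, w} h i := by
  suffices ∀ d h i, i < 2 ^ (h + 1 + d) → ExtSymEq.{u, w} h i from
    this i h i (Nat.lt_two_pow_self.trans_le (Nat.pow_le_pow_right two_pos (Nat.le_add_left _ _)))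
  intro d
  induction d with
  | zero => exact fun h i hi => extSymEq_of_lt hi
  | succ d ih =>
    intro h i hi
    obtain hlt | hle := lt_or_ge i (2 ^ (h + 1))
    · exact extSymEq_of_lt hlt
    · obtain ⟨n, hn⟩ := Nat.exists_eq_add_of_le' (Nat.one_le_two_pow (n := h + 1))
      obtain ⟨j, rfl⟩ := Nat.exists_eq_add_of_le' (hn ▸ hle)
      rw [← add_assoc (h + 1), add_right_comm (h + 1)] at hi
      exact .of_succ hn fun i hi' => ih (h + 1) i (hi'.trans_lt hi)

end Computation

end MacLane

open CategoryTheory.Abelian in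
/-- The Mac Lane cohomology of `𝔽₂` with coefficients in the identity
functor, `HML^k(𝔽₂; I) = Ext^k_{F(𝔽₂)}(I, I)`, is `𝔽₂` for all even `k ≥ 0` and vanishes
for all odd `k`. -/
theorem stmt18 [CategoryTheory.HasExt.{1} FunCatF2] (k : ℕ) :
    (Even k → Nonempty (Ext inclFunctor inclFunctor k ≃+ ZMod 2)) ∧
    (¬ Even k → Subsingleton (Ext inclFunctor inclFunctor k)) := by
  let e := MacLane.extCongr inclFunctor MacLane.symOneIso k
  have h := MacLane.extSymEq 0 k
  rw [even_iff_two_dvd]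
  refine ⟨fun hk => ?_, fun hk => ?_⟩
  · obtain ⟨e'⟩ := h.nonempty_equiv hk
    exact ⟨e.trans e'⟩
  · have := h.subsingleton hk
    exact e.subsingleton

end
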